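/- arXiv:2601.16676 — 6 statements merged into one kernel-verified Lean document; each statement's English description precedes it below -/
import Mathlib

section
/- Let P be an m×m skew-symmetric matrix polynomial over ℂ. Then there exist a natural number r with 2r ≤ m, a unimodular m×m matrix polynomial F (i.e., det F is a nonzero constant), and monic polynomials g₁, …, g_r ∈ ℂ[λ] with gⱼ dividing gⱼ₊₁ for j = 1, …, r−1, such that Fᵀ P F equals the block-diagonal matrix polynomial whose first r diagonal blocks are the 2×2 blocks [[0, gⱼ], [−gⱼ, 0]] (j = 1, …, r) and whose last diagonal block is the (m−2r)×(m−2r) zero matrix. -/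
open Polynomial Matrix

/-- The skew-symmetric Smith canonical form: block diagonal matrix with `r` diagonal
2×2 blocks `[[0, gⱼ], [−gⱼ, 0]]` followed by an `(m − 2r) × (m − 2r)` zero block. -/
noncomputable def skewSmithForm (m r : ℕ) (g : Fin r → Polynomial ℂ) :
    Matrix (Fin m) (Fin m) (Polynomial ℂ) := fun i j =>
  let ge : ℕ → Polynomial ℂ := fun k => if h : k < r then g ⟨k, h⟩ else 0
  if (i : ℕ) % 2 = 0 ∧ (j : ℕ) = (i : ℕ) + 1 then ge ((i : ℕ) / 2)
  else if (j : ℕ) % 2 = 0 ∧ (i : ℕ) = (j : ℕ) + 1 then -ge ((j : ℕ) / 2)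
  else 0

/-!
The argument works for an alternating form `B` over any principal ideal domain. By Noetherianity
some value `d = B x y` is minimal for divisibility among the values of `B`. The values `B x z` with
`x` fixed form a principal ideal, so `d` divides all of them, and likewise all `B z y`. Adding a
multiple of `x` to an arbitrary `z` arranges `B z y = d`, so the same reasoning with `z` in place
of `x` shows that `d` divides every value of `B`. Hence, if `B ≠ 0`, the module splits as the span
of `x` and `y` plus their orthogonal complement, where all values of `B` are again multiples of
`d`, and one concludes by induction on the rank.
-/

section DvdMinimalValue

variable {R M N : Type*} [CommRing R] [AddCommGroup M] [Module R M] [AddCommGroup N] [Module R N]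

theorem exists_forall_dvd_of_dvd [IsNoetherianRing R] {ι : Type*} [Nonempty ι] (f : ι → R) :
    ∃ i, ∀ j, f j ∣ f i → f i ∣ f j := by
  obtain ⟨i, -, hi⟩ := exists_maximalFor_of_wellFoundedGT (fun _ : ι ↦ True)
    (fun i ↦ Ideal.span {f i}) ⟨Classical.arbitrary ι, trivial⟩
  exact ⟨i, fun j hj ↦ Ideal.span_singleton_le_span_singleton.1
    (hi trivial (Ideal.span_singleton_le_span_singleton.2 hj))⟩

variable [IsPrincipalIdealRing R]

theorem exists_apply_dvd_apply (φ : M →ₗ[R] R) : ∃ y, ∀ z, φ y ∣ φ z := by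
  obtain ⟨d, hd⟩ := (IsPrincipalIdealRing.principal (LinearMap.range φ)).principal
  have mem_range_iff (a : R) : a ∈ LinearMap.range φ ↔ d ∣ a := by
    rw [hd, Ideal.submodule_span_eq, Ideal.mem_span_singleton]
  obtain ⟨y, rfl⟩ := (mem_range_iff d).2 dvd_rfl
  exact ⟨y, fun z ↦ (mem_range_iff _).1 ⟨z, rfl⟩⟩

theorem apply_dvd_apply_right_of_dvd_minimal {B : M →ₗ[R] N →ₗ[R] R} {x : M} {y : N}
    (hmin : ∀ z w, B z w ∣ B x y → B x y ∣ B z w) (w : N) : B x y ∣ B x w := by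
  obtain ⟨y', hy'⟩ := exists_apply_dvd_apply (B x)
  exact (hmin x y' (hy' y)).trans (hy' w)

theorem apply_dvd_apply_of_dvd_minimal {B : M →ₗ[R] N →ₗ[R] R} {x : M} {y : N}
    (hmin : ∀ z w, B z w ∣ B x y → B x y ∣ B z w) (z : M) (w : N) : B x y ∣ B z w := by
  obtain ⟨p, hp⟩ : B x y ∣ B z y :=
    apply_dvd_apply_right_of_dvd_minimal (B := B.flip) (fun w z ↦ hmin z w) z
  let z' := z + (1 - p) • x
  have hz'y : B z' y = B x y := by
    simp only [z', map_add, map_smul, LinearMap.add_apply, LinearMap.smul_apply, smul_eq_mul, hp]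
    ring
  have hz'w : B z' w = B z w + (1 - p) * B x w := by simp [z']
  have hdvd : B x y ∣ B z' w := by
    rw [← hz'y] at hmin ⊢
    exact apply_dvd_apply_right_of_dvd_minimal hmin w
  rw [hz'w] at hdvd
  exact (dvd_add_left ((apply_dvd_apply_right_of_dvd_minimal hmin w).mul_left _)).1 hdvd

theorem exists_apply_apply_dvd (B : M →ₗ[R] N →ₗ[R] R) :
    ∃ x y, ∀ z w, B x y ∣ B z w := by
  obtain ⟨⟨x, y⟩, hmin⟩ := exists_forall_dvd_of_dvd fun p : M × N ↦ B p.1 p.2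
  exact ⟨x, y, apply_dvd_apply_of_dvd_minimal fun z w ↦ hmin (z, w)⟩

theorem exists_normalize_apply_eq_and_apply_apply_dvd [NormalizationMonoid R]
    (B : M →ₗ[R] N →ₗ[R] R) :
    ∃ x y, normalize (B x y) = B x y ∧ ∀ z w, B x y ∣ B z w := by
  obtain ⟨x, y, hdvd⟩ := exists_apply_apply_dvd B
  have hnorm : B x ((normUnit (B x y) : R) • y) = normalize (B x y) := by
    rw [map_smul, smul_eq_mul, normalize_apply, mul_comm]
  refine ⟨x, (normUnit (B x y) : R) • y, ?_⟩
  rw [hnorm]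
  exact ⟨normalize_idem _, fun z w ↦ normalize_dvd_iff.2 (hdvd z w)⟩

end DvdMinimalValue

section InvariantFactors

variable {R : Type*} [CommRing R]

/-- The conditions imposed on invariant factors in a Smith normal form: they are nonzero,
normalized (monic, for polynomials over a field), and each divides all later ones. -/
structure IsInvariantFactorChain [NormalizationMonoid R] {r : ℕ} (g : Fin r → R) :
    Prop where
  ne_zero : ∀ j, g j ≠ 0
  normalize_eq : ∀ j, normalize (g j) = g j
  dvd : ∀ ⦃i j⦄, i ≤ j → g i ∣ g j

theorem IsInvariantFactorChain.cons [NormalizationMonoid R] {r : ℕ} {g : Fin r → R}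
    (hg : IsInvariantFactorChain g) {d : R} (hd : d ≠ 0) (hnorm : normalize d = d)
    (hdvd : ∀ j, d ∣ g j) : IsInvariantFactorChain (Fin.cons d g : Fin (r + 1) → R) where
  ne_zero := Fin.cases hd hg.ne_zero
  normalize_eq := Fin.cases hnorm hg.normalize_eq
  dvd := by
    refine Fin.cases (fun j _ ↦ ?_) fun i ↦ Fin.cases (fun hi ↦ ?_) fun j hij ↦ ?_
    · exact Fin.cases dvd_rfl hdvd j
    · exact absurd hi (Fin.succ_pos i).not_ge
    · exact hg.dvd (Fin.succ_le_succ_iff.1 hij)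

/-- The block diagonal `m × m` matrix with diagonal blocks `[[0, gⱼ], [-gⱼ, 0]]` followed by zeros,
which is the Smith form of an alternating matrix over an arbitrary commutative ring. Blocks that
do not fit are cut off, so it is meant for `2 * r ≤ m`. -/
def alternatingSmithForm (m : ℕ) {r : ℕ} (g : Fin r → R) : Matrix (Fin m) (Fin m) R := fun i j ↦
  let blockEntry : ℕ → R := fun k ↦ if h : k < r then g ⟨k, h⟩ else 0
  if (i : ℕ) % 2 = 0 ∧ (j : ℕ) = i + 1 then blockEntry (i / 2)
  else if (j : ℕ) % 2 = 0 ∧ (i : ℕ) = j + 1 then -blockEntry (j / 2)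
  else 0

variable {m r : ℕ} {g : Fin r → R}

theorem skewSmithForm_eq_alternatingSmithForm (g : Fin r → ℂ[X]) :
    skewSmithForm m r g = alternatingSmithForm m g :=
  rfl

theorem alternatingSmithForm_fin_zero (g : Fin 0 → R) : alternatingSmithForm m g = 0 := by
  ext i j
  simp [alternatingSmithForm]

theorem alternatingSmithForm_apply_two_mul (g : Fin r → R) (hr : 2 * r ≤ m) (k : Fin r) :
    alternatingSmithForm m g ⟨2 * k, by lia⟩ ⟨2 * k + 1, by lia⟩ = g k := by
  simp [alternatingSmithForm]

theorem alternatingSmithForm_cons_succ_succ (d : R) (i j : Fin m) :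
    alternatingSmithForm (m + 2) (Fin.cons d g : Fin (r + 1) → R) i.succ.succ j.succ.succ =
      alternatingSmithForm m g i j := by
  have cons_succ (k : ℕ) :
      (if h : k + 1 < r + 1 then (Fin.cons d g : Fin (r + 1) → R) ⟨k + 1, h⟩ else 0) =
        if h : k < r then g ⟨k, h⟩ else 0 := by
    simp only [Nat.add_lt_add_iff_right]
    rfl
  have add_two_div (a : ℕ) : (a + 1 + 1) / 2 = a / 2 + 1 := by lia
  have add_two_mod (a : ℕ) : (a + 1 + 1) % 2 = a % 2 := by lia
  simp only [alternatingSmithForm, Fin.val_succ, add_two_div, add_two_mod, cons_succ,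
    Nat.add_right_cancel_iff]

theorem eq_alternatingSmithForm_cons {A : Matrix (Fin (m + 2)) (Fin (m + 2)) R}
    (hskew : ∀ i j, A j i = -A i j) (hdiag : ∀ i, A i i = 0)
    (hzero : ∀ j : Fin m, A 0 j.succ.succ = 0) (hone : ∀ j : Fin m, A 1 j.succ.succ = 0)
    (hblock : A.submatrix (Fin.succ ∘ Fin.succ) (Fin.succ ∘ Fin.succ) =
      alternatingSmithForm m g) :
    A = alternatingSmithForm (m + 2) (Fin.cons (A 0 1) g : Fin (r + 1) → R) := by
  ext i j
  refine Fin.cases ?_ (Fin.cases ?_ fun i ↦ ?_) i <;>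
    refine Fin.cases ?_ (Fin.cases ?_ fun j ↦ ?_) j
  · simp [alternatingSmithForm, hdiag]
  · simp [alternatingSmithForm]
  · simp [alternatingSmithForm, hzero]
  · simp [alternatingSmithForm, hskew 0 1]
  · simp [alternatingSmithForm, hdiag]
  · simp [alternatingSmithForm, hone]
  · simp [alternatingSmithForm, hskew 0, hzero]
  · simp [alternatingSmithForm, hskew 1, hone]
  · rw [alternatingSmithForm_cons_succ_succ, ← hblock]
    rfl

end InvariantFactors

section AlternatingForm

variable {R : Type*} [CommRing R]

theorem isAlt_toBilin' {n : Type*} [Fintype n] [DecidableEq n] {P : Matrix n n R}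
    (hskew : Pᵀ = -P) (hdiag : ∀ i, P i i = 0) : P.toBilin'.IsAlt := by
  intro x
  have hswap (i j : n) : P j i = -P i j := congr_fun₂ hskew i j
  rw [Matrix.toBilin'_apply, ← Finset.sum_product']
  refine Finset.sum_involution (fun p _ ↦ p.swap) (fun p _ ↦ ?_) (fun p _ hp hfix ↦ hp ?_)
    (fun _ _ ↦ Finset.mem_univ _) (fun p _ ↦ p.swap_swap)
  · simp only [Prod.fst_swap, Prod.snd_swap, hswap p.1 p.2]
    ring
  · obtain ⟨i, j⟩ := p
    obtain rfl : j = i := congr_arg Prod.fst hfix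
    simp [hdiag]

section Module

variable {M : Type*} [AddCommGroup M] [Module R M]

theorem eq_zero_of_smul_add_eq_zero_of_apply_eq_zero [NoZeroDivisors R] {φ : M →ₗ[R] R} {v z : M}
    (hv : φ v ≠ 0) (hz : φ z = 0) {c : R} (h : c • v + z = 0) : c = 0 := by
  have hφ : c * φ v = 0 := by simpa [hz] using congr_arg φ h
  exact (mul_eq_zero.1 hφ).resolve_right hv

theorem exists_apply_add_smul_eq_zero {φ : M →ₗ[R] R} {v z : M} (hdvd : φ v ∣ φ z) :
    ∃ c : R, φ (z + c • v) = 0 := by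
  obtain ⟨c, hc⟩ := hdvd
  exact ⟨-c, by simp [hc, mul_comm]⟩

theorem exists_basis_cons_cons_of_apply_dvd [NoZeroDivisors R] {B : LinearMap.BilinForm R M}
    (hB : B.IsAlt) {x y : M} (hxy : B x y ≠ 0) (hx : ∀ z, B x y ∣ B x z)
    (hy : ∀ z, B x y ∣ B y z) {n : ℕ}
    (c : Module.Basis (Fin n) R ↥(LinearMap.ker (B x) ⊓ LinearMap.ker (B y))) :
    ∃ b : Module.Basis (Fin (n + 2)) R M,
      b 0 = x ∧ b 1 = y ∧ ∀ i : Fin n, b i.succ.succ = c i := by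
  have hyx : B y x = -B x y := (hB.neg_eq x y).symm
  let kerBasis : Module.Basis (Fin (n + 1)) R (LinearMap.ker (B y)) :=
    .mkFinConsOfLE y (hB y) c inf_le_right
      (fun _ z hz ↦ eq_zero_of_smul_add_eq_zero_of_apply_eq_zero hxy hz.1) fun z hz ↦ by
        obtain ⟨a, ha⟩ := exists_apply_add_smul_eq_zero (hx z)
        exact ⟨a, ha, add_mem hz (Submodule.smul_mem _ a (hB y))⟩
  let b : Module.Basis (Fin (n + 2)) R M :=
    .mkFinCons x kerBasis
      (fun _ z hz ↦ eq_zero_of_smul_add_eq_zero_of_apply_eq_zero (hyx ▸ neg_ne_zero.2 hxy) hz)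
      fun z ↦ exists_apply_add_smul_eq_zero (hyx ▸ neg_dvd.2 (hy z))
  have coe_kerBasis : ⇑kerBasis = Fin.cons ⟨y, hB y⟩ (Submodule.inclusion inf_le_right ∘ c) :=
    Module.Basis.coe_mkFinConsOfLE ..
  have coe_b : ⇑b = Fin.cons x ((↑) ∘ kerBasis) := Module.Basis.coe_mkFinCons ..
  rw [coe_kerBasis] at coe_b
  exact ⟨b, congr_fun coe_b 0, congr_fun coe_b 1, fun i ↦ congr_fun coe_b i.succ.succ⟩

theorem toMatrix_eq_alternatingSmithForm_cons {B : LinearMap.BilinForm R M} (hB : B.IsAlt) {x y : M}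
    {n r : ℕ} {g : Fin r → R} (b : Module.Basis (Fin (n + 2)) R M) (hb₀ : b 0 = x) (hb₁ : b 1 = y)
    (c : Module.Basis (Fin n) R ↥(LinearMap.ker (B x) ⊓ LinearMap.ker (B y)))
    (hbc : ∀ i : Fin n, b i.succ.succ = c i)
    (hc : LinearMap.BilinForm.toMatrix c (B.restrict _) = alternatingSmithForm n g) :
    LinearMap.BilinForm.toMatrix b B =
      alternatingSmithForm (n + 2) (Fin.cons (B x y) g : Fin (r + 1) → R) := by
  have hentry : LinearMap.BilinForm.toMatrix b B 0 1 = B x y := by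
    rw [LinearMap.BilinForm.toMatrix_apply, hb₀, hb₁]
  rw [← hentry]
  refine eq_alternatingSmithForm_cons (fun i j ↦ ?_) (fun i ↦ ?_) (fun j ↦ ?_) (fun j ↦ ?_) ?_
  · rw [LinearMap.BilinForm.toMatrix_apply, LinearMap.BilinForm.toMatrix_apply, hB.neg_eq]
  · rw [LinearMap.BilinForm.toMatrix_apply, hB.self_eq_zero]
  · rw [LinearMap.BilinForm.toMatrix_apply, hb₀, hbc]
    exact (c j).2.1
  · rw [LinearMap.BilinForm.toMatrix_apply, hb₁, hbc]
    exact (c j).2.2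
  · rw [← hc]
    ext i j
    simp [LinearMap.BilinForm.toMatrix_apply, hbc]

end Module

variable [IsDomain R] [IsPrincipalIdealRing R] [NormalizationMonoid R]

theorem exists_basis_toMatrix_eq_alternatingSmithForm {M : Type*} [AddCommGroup M] [Module R M]
    [Module.Free R M] [Module.Finite R M] {B : LinearMap.BilinForm R M} (hB : B.IsAlt) {n : ℕ}
    (hn : Module.finrank R M = n) :
    ∃ (r : ℕ) (g : Fin r → R) (b : Module.Basis (Fin n) R M), 2 * r ≤ n ∧
      IsInvariantFactorChain g ∧ LinearMap.BilinForm.toMatrix b B = alternatingSmithForm n g := by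
  induction n using Nat.strong_induction_on generalizing M with
  | _ n ih =>
  obtain ⟨x, y, hnorm, hdvd⟩ := exists_normalize_apply_eq_and_apply_apply_dvd B
  by_cases hxy : B x y = 0
  · have hB₀ : B = 0 := LinearMap.ext₂ fun z w ↦ zero_dvd_iff.1 (hxy ▸ hdvd z w)
    refine ⟨0, Fin.elim0, Module.finBasisOfFinrankEq R M hn, Nat.zero_le n,
      ⟨(·.elim0), (·.elim0), (·.elim0)⟩, ?_⟩
    rw [hB₀, map_zero, alternatingSmithForm_fin_zero]
  let N : Submodule R M := LinearMap.ker (B x) ⊓ LinearMap.ker (B y)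
  have hext {k : ℕ} (c : Module.Basis (Fin k) R N) :=
    exists_basis_cons_cons_of_apply_dvd hB hxy (hdvd x) (hdvd y) c
  obtain rfl : n = Module.finrank R N + 2 := by
    obtain ⟨b, -⟩ := hext (Module.finBasis R N)
    rw [← hn, Module.finrank_eq_card_basis b, Fintype.card_fin]
  obtain ⟨r, g, c, hr, hg, hc⟩ := ih _ (by lia) (B := B.restrict N) (fun z ↦ hB z) rfl
  have hdvd_g (j : Fin r) : B x y ∣ g j := by
    rw [← alternatingSmithForm_apply_two_mul g hr j, ← hc, LinearMap.BilinForm.toMatrix_apply]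
    exact hdvd _ _
  obtain ⟨b, hb₀, hb₁, hbc⟩ := hext c
  exact ⟨r + 1, Fin.cons (B x y) g, b, by lia, hg.cons hxy hnorm hdvd_g,
    toMatrix_eq_alternatingSmithForm_cons hB b hb₀ hb₁ c hbc hc⟩

theorem skew_symmetric_smith_form_exists_general {m : ℕ} {P : Matrix (Fin m) (Fin m) R}
    (hP : Pᵀ = -P) (hdiag : ∀ i, P i i = 0) :
    ∃ (r : ℕ) (F : Matrix (Fin m) (Fin m) R) (g : Fin r → R), 2 * r ≤ m ∧
      IsUnit F.det ∧ IsInvariantFactorChain g ∧ Fᵀ * P * F = alternatingSmithForm m g := by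
  obtain ⟨r, g, b, hr, hg, hb⟩ := exists_basis_toMatrix_eq_alternatingSmithForm
    (isAlt_toBilin' hP hdiag) (Module.finrank_fin_fun R)
  let e := Pi.basisFun R (Fin m)
  have hP_eq : LinearMap.BilinForm.toMatrix e P.toBilin' = P := by
    rw [LinearMap.BilinForm.toMatrix_basisFun, LinearMap.BilinForm.toMatrix'_toBilin']
  refine ⟨r, e.toMatrix b, g, hr,
    Matrix.isUnit_det_of_right_inverse (e.toMatrix_mul_toMatrix_flip b), hg, ?_⟩
  calc (e.toMatrix b)ᵀ * P * e.toMatrix b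
      = (e.toMatrix b)ᵀ * LinearMap.BilinForm.toMatrix e P.toBilin' * e.toMatrix b := by rw [hP_eq]
    _ = LinearMap.BilinForm.toMatrix b P.toBilin' :=
      LinearMap.BilinForm.toMatrix_mul_basis_toMatrix e b _
    _ = alternatingSmithForm m g := hb

end AlternatingForm

/-- Every skew-symmetric matrix polynomial over ℂ is unimodularly congruent to its
skew-symmetric Smith form. -/
theorem skew_symmetric_smith_form_exists (m : ℕ)
    (P : Matrix (Fin m) (Fin m) (Polynomial ℂ)) (hP : Pᵀ = -P) :
    ∃ (r : ℕ) (_ : 2 * r ≤ m) (F : Matrix (Fin m) (Fin m) (Polynomial ℂ))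
      (g : Fin r → Polynomial ℂ),
      (∃ c : ℂ, c ≠ 0 ∧ F.det = Polynomial.C c) ∧
      (∀ j, (g j).Monic) ∧
      (∀ (j : Fin r) (h : (j : ℕ) + 1 < r), g j ∣ g ⟨(j : ℕ) + 1, h⟩) ∧
      Fᵀ * P * F = skewSmithForm m r g := by
  classical
  obtain ⟨r, F, g, hr, hF, hg, hform⟩ := skew_symmetric_smith_form_exists_general hP
    fun i ↦ self_eq_neg.1 (congr_fun₂ hP i i)
  obtain ⟨c, hc, hcF⟩ := Polynomial.isUnit_iff.1 hF
  exact ⟨r, hr, F, g, ⟨c, hc.ne_zero, hcF.symm⟩,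
    fun j ↦ (normalize_eq_self_iff_monic (hg.ne_zero j)).1 (hg.normalize_eq j),
    fun j _ ↦ hg.dvd (Nat.le_succ j),
    hform.trans (skewSmithForm_eq_alternatingSmithForm g).symm⟩
end

section
/- Let P be an m×m skew-symmetric matrix polynomial over ℂ. Suppose F and F' are unimodular m×m matrix polynomials, r and r' are natural numbers with 2r ≤ m and 2r' ≤ m, and g₁ | g₂ | ⋯ | g_r and g'₁ | g'₂ | ⋯ | g'_{r'} are monic polynomials in ℂ[λ], such that Fᵀ P F and F'ᵀ P F' are, respectively, the block-diagonal matrix polynomials with 2×2 diagonal blocks [[0, gⱼ], [−gⱼ, 0]] (resp. [[0, g'ⱼ], [−g'ⱼ, 0]]) followed by a zero block of size m−2r (resp. m−2r'). Then r = r' and gⱼ = g'ⱼ for all j = 1, …, r; that is, the skew-symmetric Smith canonical form of P is unique. -/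
open Polynomial Matrix

/-!
The ideal generated by the `k × k` minors of a matrix is unchanged when the matrix is multiplied on
either side by an invertible matrix, since the minors of a product are combinations of the minors of
either factor. Swapping the two columns of each block turns the skew-symmetric Smith form into a
diagonal matrix with diagonal `g₀, -g₀, g₁, -g₁, …, 0`, which is a divisibility chain; for such a
matrix the `k`-th ideal is generated by the product of the first `k` diagonal entries. So `P`
determines these products up to units, hence their successive quotients, hence the monic `gⱼ`.
-/

section DeterminantalIdeal

variable {R m n l : Type*} [CommRing R]

/-- The `k`-th determinantal ideal of a matrix, generated by its `k × k` minors. Rows and columns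
are selected by arbitrary maps from `Fin k`: repetitions only add the zero minor, and reorderings
only change signs. -/
def determinantalIdeal (k : ℕ) (A : Matrix m n R) : Ideal R :=
  Ideal.span {x | ∃ (rows : Fin k → m) (cols : Fin k → n), (A.submatrix rows cols).det = x}

lemma det_submatrix_mem_determinantalIdeal {k : ℕ} (A : Matrix m n R) (rows : Fin k → m)
    (cols : Fin k → n) : (A.submatrix rows cols).det ∈ determinantalIdeal k A :=
  Ideal.subset_span ⟨rows, cols, rfl⟩

lemma determinantalIdeal_le_iff {k : ℕ} {A : Matrix m n R} {I : Ideal R} :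
    determinantalIdeal k A ≤ I ↔
      ∀ (rows : Fin k → m) (cols : Fin k → n), (A.submatrix rows cols).det ∈ I := by
  refine Ideal.span_le.trans ⟨fun h rows cols => h ⟨rows, cols, rfl⟩, ?_⟩
  rintro h _ ⟨rows, cols, rfl⟩
  exact h rows cols

lemma determinantalIdeal_submatrix_le {m' n' : Type*} (k : ℕ) (A : Matrix m n R) (f : m' → m)
    (g : n' → n) : determinantalIdeal k (A.submatrix f g) ≤ determinantalIdeal k A :=
  determinantalIdeal_le_iff.2 fun rows cols =>
    det_submatrix_mem_determinantalIdeal A (f ∘ rows) (g ∘ cols)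

lemma determinantalIdeal_submatrix_equiv {m' n' : Type*} (k : ℕ) (A : Matrix m n R) (f : m' ≃ m)
    (g : n' ≃ n) : determinantalIdeal k (A.submatrix f g) = determinantalIdeal k A := by
  refine (determinantalIdeal_submatrix_le k A f g).antisymm ?_
  simpa using determinantalIdeal_submatrix_le k (A.submatrix f g) f.symm g.symm

lemma determinantalIdeal_transpose_le (k : ℕ) (A : Matrix m n R) :
    determinantalIdeal k Aᵀ ≤ determinantalIdeal k A :=
  determinantalIdeal_le_iff.2 fun rows cols => by
    rw [← det_transpose]
    exact det_submatrix_mem_determinantalIdeal A cols rows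

lemma determinantalIdeal_transpose (k : ℕ) (A : Matrix m n R) :
    determinantalIdeal k Aᵀ = determinantalIdeal k A :=
  (determinantalIdeal_transpose_le k A).antisymm (determinantalIdeal_transpose_le k Aᵀ)

lemma det_submatrix_mul_eq_sum [Fintype n] {k : ℕ} (A : Matrix m n R) (B : Matrix n l R)
    (rows : Fin k → m) (cols : Fin k → l) :
    ((A * B).submatrix rows cols).det =
      ∑ φ : Fin k → n, (∏ i, A (rows i) (φ i)) * (B.submatrix φ cols).det := by
  classical
  have row_eq (i : Fin k) :
      (A * B).submatrix rows cols i = ∑ j, A (rows i) j • fun c => B j (cols c) := by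
    ext c
    simp [mul_apply]
  calc ((A * B).submatrix rows cols).det
      = detRowAlternating fun i => ∑ j, A (rows i) j • fun c => B j (cols c) :=
        congrArg detRowAlternating (funext row_eq)
    _ = ∑ φ : Fin k → n, detRowAlternating fun i => A (rows i) (φ i) • fun c => B (φ i) (cols c) :=
        detRowAlternating.toMultilinearMap.map_sum _
    _ = ∑ φ : Fin k → n, (∏ i, A (rows i) (φ i)) * (B.submatrix φ cols).det :=
        Finset.sum_congr rfl fun φ _ => detRowAlternating.toMultilinearMap.map_smul_univ _ _

lemma determinantalIdeal_mul_le_right [Fintype n] (k : ℕ) (A : Matrix m n R) (B : Matrix n l R) :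
    determinantalIdeal k (A * B) ≤ determinantalIdeal k B :=
  determinantalIdeal_le_iff.2 fun rows cols => by
    rw [det_submatrix_mul_eq_sum]
    exact Ideal.sum_mem _ fun φ _ =>
      Ideal.mul_mem_left _ _ (det_submatrix_mem_determinantalIdeal B φ cols)

lemma determinantalIdeal_mul_le_left [Fintype n] (k : ℕ) (A : Matrix m n R) (B : Matrix n l R) :
    determinantalIdeal k (A * B) ≤ determinantalIdeal k A := by
  rw [← determinantalIdeal_transpose, transpose_mul, ← determinantalIdeal_transpose k A]
  exact determinantalIdeal_mul_le_right k Bᵀ Aᵀ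

lemma determinantalIdeal_isUnit_mul [Fintype m] [DecidableEq m] (k : ℕ) {U : Matrix m m R}
    (hU : IsUnit U) (A : Matrix m n R) :
    determinantalIdeal k (U * A) = determinantalIdeal k A := by
  obtain ⟨U, rfl⟩ := hU
  refine (determinantalIdeal_mul_le_right k _ A).antisymm ?_
  calc determinantalIdeal k A
      = determinantalIdeal k ((U⁻¹).val * (U.val * A)) := by
        rw [← Matrix.mul_assoc, Units.inv_mul, Matrix.one_mul]
    _ ≤ determinantalIdeal k (U.val * A) := determinantalIdeal_mul_le_right k _ _

lemma determinantalIdeal_mul_isUnit [Fintype n] [DecidableEq n] (k : ℕ) (A : Matrix m n R)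
    {V : Matrix n n R} (hV : IsUnit V) :
    determinantalIdeal k (A * V) = determinantalIdeal k A := by
  rw [← determinantalIdeal_transpose, transpose_mul,
    determinantalIdeal_isUnit_mul k (by rwa [isUnit_transpose]), determinantalIdeal_transpose]

end DeterminantalIdeal

section DivisibilityChain

lemma prod_range_card_dvd_prod {M : Type*} [CommMonoid M] {d : ℕ → M}
    (hd : ∀ i, d i ∣ d (i + 1)) (s : Finset ℕ) :
    ∏ i ∈ Finset.range s.card, d i ∣ ∏ i ∈ s, d i := by
  induction s using Finset.induction_on_max with
  | empty => simp
  | insert a s lt_a ih =>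
    have a_notMem : a ∉ s := fun ha => (lt_a a ha).false
    have card_le : s.card ≤ a := by
      simpa using Finset.card_le_card fun x hx => Finset.mem_range.2 (lt_a x hx)
    rw [Finset.card_insert_of_notMem a_notMem, Finset.prod_range_succ_comm,
      Finset.prod_insert a_notMem]
    exact mul_dvd_mul (Nat.rel_of_forall_rel_succ_of_le (· ∣ ·) hd card_le) ih

lemma associated_of_associated_prod_range {M : Type*} [CommMonoidWithZero M] [IsCancelMulZero M]
    [Nontrivial M] {d d' : ℕ → M} (hd : ∀ i, d i ∣ d (i + 1)) (hd' : ∀ i, d' i ∣ d' (i + 1))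
    {i : ℕ}
    (h : Associated (∏ j ∈ Finset.range i, d j) (∏ j ∈ Finset.range i, d' j))
    (h_succ : Associated (∏ j ∈ Finset.range (i + 1), d j) (∏ j ∈ Finset.range (i + 1), d' j)) :
    Associated (d i) (d' i) := by
  have eq_zero {e : ℕ → M} (he : ∀ i, e i ∣ e (i + 1))
      (h0 : ∏ j ∈ Finset.range i, e j = 0) : e i = 0 := by
    obtain ⟨j, hj, hj0⟩ := Finset.prod_eq_zero_iff.1 h0
    exact zero_dvd_iff.1 <| hj0 ▸
      Nat.rel_of_forall_rel_succ_of_le (· ∣ ·) he (Finset.mem_range.1 hj).le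
  by_cases h0 : ∏ j ∈ Finset.range i, d j = 0
  · rw [eq_zero hd h0, eq_zero hd' (h.eq_zero_iff.1 h0)]
  · rw [Finset.prod_range_succ, Finset.prod_range_succ] at h_succ
    exact h_succ.of_mul_left h h0

variable {R : Type*} [CommRing R]

lemma prod_range_dvd_det_submatrix_diagonal {m k : ℕ} {d : ℕ → R} (hd : ∀ i, d i ∣ d (i + 1))
    (rows cols : Fin k → Fin m) :
    ∏ i ∈ Finset.range k, d i ∣ ((diagonal fun i : Fin m => d i).submatrix rows cols).det := by
  by_cases h_inj : Function.Injective rows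
  · have h_minor : (diagonal fun i : Fin m => d i).submatrix rows cols =
        diagonal (fun i => d (rows i)) * (1 : Matrix (Fin m) (Fin m) R).submatrix rows cols := by
      ext i j
      simp [diagonal_apply, one_apply]
    have h_prod : ∏ i ∈ Finset.range k, d i ∣ ∏ i, d (rows i) := by
      have := prod_range_card_dvd_prod hd
        (Finset.univ.map ⟨fun i => (rows i : ℕ), Fin.val_injective.comp h_inj⟩)
      simpa using this
    rw [h_minor, det_mul, det_diagonal]
    exact h_prod.mul_right _
  · obtain ⟨i, j, h_eq, h_ne⟩ := Function.not_injective_iff.1 h_inj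
    rw [det_zero_of_row_eq h_ne (by ext; simp [h_eq])]
    exact dvd_zero _

lemma determinantalIdeal_diagonal {m k : ℕ} {d : ℕ → R} (hd : ∀ i, d i ∣ d (i + 1)) (hk : k ≤ m) :
    determinantalIdeal k (diagonal fun i : Fin m => d i) =
      Ideal.span {∏ i ∈ Finset.range k, d i} := by
  apply le_antisymm
  · exact determinantalIdeal_le_iff.2 fun rows cols =>
      Ideal.mem_span_singleton.2 (prod_range_dvd_det_submatrix_diagonal hd rows cols)
  · have := det_submatrix_mem_determinantalIdeal (diagonal fun i : Fin m => d i)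
      (Fin.castLE hk) (Fin.castLE hk)
    rw [submatrix_diagonal _ _ (Fin.castLE_injective hk), det_diagonal] at this
    simpa [Ideal.span_singleton_le_iff_mem, Finset.prod_range] using this

lemma associated_of_determinantalIdeal_diagonal_eq [IsDomain R] {m : ℕ} {d d' : ℕ → R}
    (hd : ∀ i, d i ∣ d (i + 1)) (hd' : ∀ i, d' i ∣ d' (i + 1))
    (h : ∀ k ≤ m, determinantalIdeal k (diagonal fun i : Fin m => d i) =
      determinantalIdeal k (diagonal fun i : Fin m => d' i)) {i : ℕ} (hi : i < m) :
    Associated (d i) (d' i) := by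
  have h_prod (k : ℕ) (hk : k ≤ m) :
      Associated (∏ j ∈ Finset.range k, d j) (∏ j ∈ Finset.range k, d' j) := by
    rw [← Ideal.span_singleton_eq_span_singleton, ← determinantalIdeal_diagonal hd hk, h k hk,
      determinantalIdeal_diagonal hd' hk]
  exact associated_of_associated_prod_range hd hd' (h_prod i hi.le) (h_prod (i + 1) hi)

end DivisibilityChain

section ZeroExtend

/-- The extension of a finite family to a sequence indexed by `ℕ`, by zero. -/
def zeroExtend {R : Type*} [Zero R] {r : ℕ} (g : Fin r → R) (k : ℕ) : R :=
  if h : k < r then g ⟨k, h⟩ else 0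

lemma zeroExtend_of_lt {R : Type*} [Zero R] {r k : ℕ} (g : Fin r → R) (h : k < r) :
    zeroExtend g k = g ⟨k, h⟩ :=
  dif_pos h

lemma zeroExtend_of_le {R : Type*} [Zero R] {r k : ℕ} (g : Fin r → R) (h : r ≤ k) :
    zeroExtend g k = 0 :=
  dif_neg h.not_gt

lemma zeroExtend_ne_zero_iff {R : Type*} [Zero R] {r k : ℕ} {g : Fin r → R} (hg : ∀ j, g j ≠ 0) :
    zeroExtend g k ≠ 0 ↔ k < r := by
  simp [zeroExtend, hg]

lemma zeroExtend_dvd_succ {R : Type*} [MonoidWithZero R] {r : ℕ} {g : Fin r → R}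
    (hdiv : ∀ (j : Fin r) (h : (j : ℕ) + 1 < r), g j ∣ g ⟨(j : ℕ) + 1, h⟩) (k : ℕ) :
    zeroExtend g k ∣ zeroExtend g (k + 1) := by
  by_cases hk : k + 1 < r
  · rw [zeroExtend_of_lt g hk, zeroExtend_of_lt g (k.lt_succ_self.trans hk)]
    exact hdiv _ hk
  · rw [zeroExtend_of_le g (not_lt.1 hk)]
    exact dvd_zero _

lemma eq_of_associated_zeroExtend {R : Type*} [CommRing R] [IsDomain R] {r r' : ℕ}
    {g : Fin r → R[X]} {g' : Fin r' → R[X]} (hg : ∀ j, (g j).Monic) (hg' : ∀ j, (g' j).Monic)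
    (h : ∀ j, Associated (zeroExtend g j) (zeroExtend g' j)) :
    r = r' ∧ ∀ (j : ℕ) (hj : j < r) (hj' : j < r'), g ⟨j, hj⟩ = g' ⟨j, hj'⟩ := by
  constructor
  · refine eq_of_forall_lt_iff fun j => ?_
    rw [← zeroExtend_ne_zero_iff fun i => (hg i).ne_zero, (h j).ne_zero_iff,
      zeroExtend_ne_zero_iff fun i => (hg' i).ne_zero]
  · intro j hj hj'
    refine eq_of_monic_of_associated (hg _) (hg' _) ?_
    rw [← zeroExtend_of_lt g hj, ← zeroExtend_of_lt g' hj']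
    exact h j

end ZeroExtend

section SkewSmithForm

/-- The other index of the diagonal block of `skewSmithForm` containing `i`: the map exchanges `2j`
and `2j + 1`, except that for odd `m` it fixes the last index. -/
def blockPartner {m : ℕ} (i : Fin m) : Fin m :=
  if (i : ℕ) % 2 = 1 then ⟨i - 1, by omega⟩
  else if h : (i : ℕ) + 1 < m then ⟨i + 1, h⟩ else i

lemma blockPartner_involutive {m : ℕ} : Function.Involutive (blockPartner (m := m)) := by
  intro i
  grind [blockPartner]

lemma val_blockPartner {m : ℕ} (i : Fin m) :
    (blockPartner i : ℕ) =
      if (i : ℕ) % 2 = 1 then (i : ℕ) - 1 else if (i : ℕ) + 1 < m then (i : ℕ) + 1 else i := by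
  grind [blockPartner]

/-- The diagonal `g₀, -g₀, g₁, -g₁, …, 0, 0, …` obtained from `skewSmithForm` by swapping the two
columns of each block. -/
def skewSmithDiagonal {R : Type*} [CommRing R] {r : ℕ} (g : Fin r → R) (i : ℕ) : R :=
  (-1) ^ i * zeroExtend g (i / 2)

lemma skewSmithDiagonal_two_mul {R : Type*} [CommRing R] {r : ℕ} (g : Fin r → R) (j : ℕ) :
    skewSmithDiagonal g (2 * j) = zeroExtend g j := by
  simp [skewSmithDiagonal]

lemma skewSmithDiagonal_dvd_succ {R : Type*} [CommRing R] {r : ℕ} {g : Fin r → R}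
    (hdiv : ∀ (j : Fin r) (h : (j : ℕ) + 1 < r), g j ∣ g ⟨(j : ℕ) + 1, h⟩) (i : ℕ) :
    skewSmithDiagonal g i ∣ skewSmithDiagonal g (i + 1) := by
  have h_factor : zeroExtend g (i / 2) ∣ zeroExtend g ((i + 1) / 2) :=
    Nat.rel_of_forall_rel_succ_of_le (· ∣ ·) (zeroExtend_dvd_succ hdiv) (by omega)
  exact mul_dvd_mul (pow_dvd_pow _ i.le_succ) h_factor

lemma skewSmithForm_apply {m r : ℕ} (g : Fin r → ℂ[X]) (i j : Fin m) :
    skewSmithForm m r g i j =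
      if (i : ℕ) % 2 = 0 ∧ (j : ℕ) = i + 1 then zeroExtend g (i / 2)
      else if (j : ℕ) % 2 = 0 ∧ (i : ℕ) = j + 1 then -zeroExtend g (j / 2)
      else 0 :=
  rfl

lemma skewSmithForm_submatrix_blockPartner {m r : ℕ} (hr : 2 * r ≤ m) (g : Fin r → ℂ[X]) :
    (skewSmithForm m r g).submatrix id blockPartner =
      diagonal fun i : Fin m => skewSmithDiagonal g i := by
  ext1 i j
  have h_swap := val_blockPartner j
  rw [submatrix_apply, id_eq, skewSmithForm_apply]
  obtain rfl | h_ne := eq_or_ne i j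
  · rw [diagonal_apply_eq, skewSmithDiagonal]
    obtain h_even | h_odd := Nat.mod_two_eq_zero_or_one i
    · rw [(Nat.even_iff.2 h_even).neg_one_pow, one_mul]
      by_cases h_last : (i : ℕ) + 1 < m
      · rw [if_pos (by grind)]
      · rw [if_neg (by grind), if_neg (by grind), zeroExtend_of_le g (by grind)]
    · have h_block : (blockPartner i : ℕ) / 2 = i / 2 := by grind
      rw [(Nat.odd_iff.2 h_odd).neg_one_pow, neg_one_mul, if_neg (by grind), if_pos (by grind),
        h_block]
  · rw [diagonal_apply_ne _ h_ne, if_neg (by grind), if_neg (by grind)]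

lemma determinantalIdeal_skewSmithForm {m r : ℕ} (hr : 2 * r ≤ m) (g : Fin r → ℂ[X]) (k : ℕ) :
    determinantalIdeal k (skewSmithForm m r g) =
      determinantalIdeal k (diagonal fun i : Fin m => skewSmithDiagonal g i) := by
  rw [← skewSmithForm_submatrix_blockPartner hr]
  exact (determinantalIdeal_submatrix_equiv k _ (Equiv.refl _)
    blockPartner_involutive.toPerm).symm

lemma associated_of_determinantalIdeal_skewSmithForm_eq {m r r' : ℕ} (hr : 2 * r ≤ m)
    (hr' : 2 * r' ≤ m) {g : Fin r → ℂ[X]} {g' : Fin r' → ℂ[X]}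
    (hdiv : ∀ (j : Fin r) (h : (j : ℕ) + 1 < r), g j ∣ g ⟨(j : ℕ) + 1, h⟩)
    (hdiv' : ∀ (j : Fin r') (h : (j : ℕ) + 1 < r'), g' j ∣ g' ⟨(j : ℕ) + 1, h⟩)
    (h : ∀ k ≤ m, determinantalIdeal k (skewSmithForm m r g) =
      determinantalIdeal k (skewSmithForm m r' g')) (j : ℕ) :
    Associated (zeroExtend g j) (zeroExtend g' j) := by
  obtain hj | hj := lt_or_ge (2 * j) m
  · simp only [determinantalIdeal_skewSmithForm hr, determinantalIdeal_skewSmithForm hr'] at h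
    simpa only [skewSmithDiagonal_two_mul] using
      associated_of_determinantalIdeal_diagonal_eq (skewSmithDiagonal_dvd_succ hdiv)
        (skewSmithDiagonal_dvd_succ hdiv') h hj
  · rw [zeroExtend_of_le g (by omega), zeroExtend_of_le g' (by omega)]

end SkewSmithForm

lemma isUnit_of_det_eq_C {K n : Type*} [Field K] [Fintype n] [DecidableEq n] {F : Matrix n n K[X]}
    (hF : ∃ c : K, c ≠ 0 ∧ F.det = C c) : IsUnit F := by
  obtain ⟨c, hc, h_det⟩ := hF
  rw [isUnit_iff_isUnit_det, h_det]
  exact isUnit_C.2 hc.isUnit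

theorem skew_symmetric_smith_form_unique_general {m : ℕ} {P : Matrix (Fin m) (Fin m) ℂ[X]}
    {r r' : ℕ} (hr : 2 * r ≤ m) (hr' : 2 * r' ≤ m) {U V U' V' : Matrix (Fin m) (Fin m) ℂ[X]}
    (hU : IsUnit U) (hV : IsUnit V) (hU' : IsUnit U') (hV' : IsUnit V')
    {g : Fin r → ℂ[X]} {g' : Fin r' → ℂ[X]}
    (hg : ∀ j, (g j).Monic) (hg' : ∀ j, (g' j).Monic)
    (hdiv : ∀ (j : Fin r) (h : (j : ℕ) + 1 < r), g j ∣ g ⟨(j : ℕ) + 1, h⟩)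
    (hdiv' : ∀ (j : Fin r') (h : (j : ℕ) + 1 < r'), g' j ∣ g' ⟨(j : ℕ) + 1, h⟩)
    (hP : U * P * V = skewSmithForm m r g) (hP' : U' * P * V' = skewSmithForm m r' g') :
    r = r' ∧ ∀ (j : ℕ) (hj : j < r) (hj' : j < r'), g ⟨j, hj⟩ = g' ⟨j, hj'⟩ := by
  refine eq_of_associated_zeroExtend hg hg' <|
    associated_of_determinantalIdeal_skewSmithForm_eq hr hr' hdiv hdiv' fun k _ => ?_
  rw [← hP, ← hP', determinantalIdeal_mul_isUnit k _ hV, determinantalIdeal_mul_isUnit k _ hV',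
    determinantalIdeal_isUnit_mul k hU, determinantalIdeal_isUnit_mul k hU']

/-- Uniqueness of the skew-symmetric Smith canonical form of a skew-symmetric
matrix polynomial over ℂ. -/
theorem skew_symmetric_smith_form_unique (m : ℕ)
    (P : Matrix (Fin m) (Fin m) (Polynomial ℂ)) (hP : Pᵀ = -P)
    (r r' : ℕ) (hr : 2 * r ≤ m) (hr' : 2 * r' ≤ m)
    (F F' : Matrix (Fin m) (Fin m) (Polynomial ℂ))
    (hF : ∃ c : ℂ, c ≠ 0 ∧ F.det = Polynomial.C c)
    (hF' : ∃ c : ℂ, c ≠ 0 ∧ F'.det = Polynomial.C c)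
    (g : Fin r → Polynomial ℂ) (g' : Fin r' → Polynomial ℂ)
    (hg : ∀ j, (g j).Monic) (hg' : ∀ j, (g' j).Monic)
    (hdiv : ∀ (j : Fin r) (h : (j : ℕ) + 1 < r), g j ∣ g ⟨(j : ℕ) + 1, h⟩)
    (hdiv' : ∀ (j : Fin r') (h : (j : ℕ) + 1 < r'), g' j ∣ g' ⟨(j : ℕ) + 1, h⟩)
    (hPF : Fᵀ * P * F = skewSmithForm m r g)
    (hPF' : F'ᵀ * P * F' = skewSmithForm m r' g') :
    r = r' ∧ ∀ (j : ℕ) (hj : j < r) (hj' : j < r'), g ⟨j, hj⟩ = g' ⟨j, hj'⟩ := by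
  have hF_unit := isUnit_of_det_eq_C hF
  have hF'_unit := isUnit_of_det_eq_C hF'
  exact skew_symmetric_smith_form_unique_general hr hr' ((isUnit_transpose F).2 hF_unit) hF_unit
    ((isUnit_transpose F').2 hF'_unit) hF'_unit hg hg' hdiv hdiv' hPF hPF'
end

section
/- Let m, r, d be integers with d ≥ 1 and 2 ≤ 2r ≤ m−1. Then the set { U Vᵀ − V Uᵀ : U an m×r matrix polynomial of grade ⌊d/2⌋, V an m×r matrix polynomial of grade ⌈d/2⌉ } coincides with the set { L J₂ᵣ Lᵀ : L an m×2r matrix polynomial whose columns 1, …, r have degree at most ⌈d/2⌉ and whose columns r+1, …, 2r have degree at most ⌊d/2⌋ }, where J₂ᵣ = [[0, Δᵣ], [−Δᵣ, 0]] and Δᵣ is the r×r anti-identity matrix. -/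
open Polynomial Matrix

/-- The 2r×2r matrix `J₂ᵣ = [[0, Δᵣ], [−Δᵣ, 0]]`, where `Δᵣ` is the r×r anti-identity. -/
noncomputable def Jmat (r : ℕ) : Matrix (Fin (2 * r)) (Fin (2 * r)) (Polynomial ℂ) :=
  Matrix.of fun i j =>
    if (i : ℕ) + (j : ℕ) + 1 = 2 * r ∧ (i : ℕ) < r then 1
    else if (i : ℕ) + (j : ℕ) + 1 = 2 * r ∧ (j : ℕ) < r then -1
    else 0

/-!
List the columns of `L` as `1, …, r, 2r, …, r + 1`. This turns `J₂ᵣ` into the standard symplectic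
matrix `[[0, I], [-I, 0]]` and `L` into a block row `[A B]`, so `L J₂ᵣ Lᵀ = A Bᵀ - B Aᵀ`. The
factorizations `U Vᵀ - V Uᵀ` are those with `A = V` and `B = -U`.
-/

section

variable {ι R : Type*} {r : ℕ}

/-- The enumeration `0, …, r - 1, 2r - 1, …, r` of `Fin (2 * r)`. The second half is reversed so
that `finSumRevEquiv (.inl i)` and `finSumRevEquiv (.inr i)` are paired by the anti-diagonal. -/
def finSumRevEquiv (r : ℕ) : Fin r ⊕ Fin r ≃ Fin (2 * r) :=
  ((Equiv.refl _).sumCongr Fin.revPerm).trans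
    (finSumFinEquiv.trans (finCongr (two_mul r).symm))

theorem val_finSumRevEquiv_inl (i : Fin r) : (finSumRevEquiv r (.inl i) : ℕ) = i := by
  simp [finSumRevEquiv]

theorem val_finSumRevEquiv_inr (i : Fin r) :
    (finSumRevEquiv r (.inr i) : ℕ) = r + i.rev := by
  simp [finSumRevEquiv, add_comm]

theorem forall_lt_iff_forall_inl {p : Fin (2 * r) → Prop} :
    (∀ k : Fin (2 * r), (k : ℕ) < r → p k) ↔ ∀ i, p (finSumRevEquiv r (.inl i)) := by
  simp [← (finSumRevEquiv r).forall_congr_right, val_finSumRevEquiv_inl, val_finSumRevEquiv_inr]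

theorem forall_ge_iff_forall_inr {p : Fin (2 * r) → Prop} :
    (∀ k : Fin (2 * r), r ≤ (k : ℕ) → p k) ↔ ∀ i, p (finSumRevEquiv r (.inr i)) := by
  simp [← (finSumRevEquiv r).forall_congr_right, val_finSumRevEquiv_inl, val_finSumRevEquiv_inr]

theorem val_inl_add_val_inr_add_one_eq_iff (i j : Fin r) :
    (finSumRevEquiv r (.inl i) + finSumRevEquiv r (.inr j) + 1 : ℕ) = 2 * r ↔ i = j := by
  rw [val_finSumRevEquiv_inl, val_finSumRevEquiv_inr, Fin.val_rev, Fin.ext_iff]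
  lia

theorem Jmat_submatrix_finSumRevEquiv (r : ℕ) :
    (Jmat r).submatrix (finSumRevEquiv r) (finSumRevEquiv r) = -J (Fin r) ℂ[X] := by
  have inl_lt (i : Fin r) : (finSumRevEquiv r (.inl i) : ℕ) < r := by
    simp [val_finSumRevEquiv_inl]
  have inr_ge (i : Fin r) : ¬ (finSumRevEquiv r (.inr i) : ℕ) < r := by
    simp [val_finSumRevEquiv_inr]
  ext1 (i | i) (j | j)
  · have off_antidiagonal :
        (finSumRevEquiv r (.inl i) + finSumRevEquiv r (.inl j) + 1 : ℕ) ≠ 2 * r := by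
      linarith [inl_lt i, inl_lt j]
    simp [Jmat, J, off_antidiagonal]
  · simp [Jmat, J, inl_lt, inr_ge, val_inl_add_val_inr_add_one_eq_iff, Matrix.one_apply]
  · by_cases hji : j = i <;>
      simp [Jmat, J, inl_lt, inr_ge, add_comm (finSumRevEquiv r (.inr i) : ℕ),
        val_inl_add_val_inr_add_one_eq_iff, eq_comm (a := i), hji]
  · simp [Jmat, J, inr_ge]

theorem fromCols_mul_J_mul_transpose {l : Type*} [Fintype l] [DecidableEq l] [CommRing R]
    (A B : Matrix ι l R) :
    fromCols A B * J l R * (fromCols A B)ᵀ = B * Aᵀ - A * Bᵀ := by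
  simp [J, fromCols_mul_fromBlocks, transpose_fromCols, fromCols_mul_fromRows, sub_eq_add_neg]

/-- The `2r`-column matrix `[A BΔ]`: the columns of `A` followed by those of `B` in reverse
order. -/
def fromColsRev (A B : Matrix ι (Fin r) R) : Matrix ι (Fin (2 * r)) R :=
  (fromCols A B).submatrix id (finSumRevEquiv r).symm

theorem fromColsRev_apply_inl (A B : Matrix ι (Fin r) R) (a : ι) (i : Fin r) :
    fromColsRev A B a (finSumRevEquiv r (.inl i)) = A a i := by
  simp [fromColsRev]

theorem fromColsRev_apply_inr (A B : Matrix ι (Fin r) R) (a : ι) (i : Fin r) :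
    fromColsRev A B a (finSumRevEquiv r (.inr i)) = B a i := by
  simp [fromColsRev]

theorem exists_fromColsRev_eq (L : Matrix ι (Fin (2 * r)) R) : ∃ A B, fromColsRev A B = L := by
  let L' := L.submatrix id (finSumRevEquiv r)
  exact ⟨L'.toCols₁, L'.toCols₂, by simp [fromColsRev, L']⟩

theorem fromColsRev_mul_Jmat_mul_transpose (A B : Matrix ι (Fin r) ℂ[X]) :
    fromColsRev A B * Jmat r * (fromColsRev A B)ᵀ = A * Bᵀ - B * Aᵀ := by
  have hJ : Jmat r =
      (-J (Fin r) ℂ[X]).submatrix (finSumRevEquiv r).symm (finSumRevEquiv r).symm := by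
    simp [← Jmat_submatrix_finSumRevEquiv]
  calc fromColsRev A B * Jmat r * (fromColsRev A B)ᵀ
      = fromCols A B * -J (Fin r) ℂ[X] * (fromCols A B)ᵀ := by
        simp only [fromColsRev, hJ, transpose_submatrix, submatrix_mul_equiv, submatrix_id_id]
    _ = -(fromCols A B * J (Fin r) ℂ[X] * (fromCols A B)ᵀ) := by
        rw [Matrix.mul_neg, Matrix.neg_mul]
    _ = A * Bᵀ - B * Aᵀ := by rw [fromCols_mul_J_mul_transpose, neg_sub]

end

theorem factorization_sets_eq_general (ι : Type*) (r p q : ℕ) :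
    {P : Matrix ι ι ℂ[X] |
      ∃ U V : Matrix ι (Fin r) ℂ[X],
        (∀ i j, (U i j).natDegree ≤ p) ∧ (∀ i j, (V i j).natDegree ≤ q) ∧
        P = U * Vᵀ - V * Uᵀ} =
    {P : Matrix ι ι ℂ[X] |
      ∃ L : Matrix ι (Fin (2 * r)) ℂ[X],
        (∀ (i : ι) (j : Fin (2 * r)), (j : ℕ) < r → (L i j).natDegree ≤ q) ∧
        (∀ (i : ι) (j : Fin (2 * r)), r ≤ (j : ℕ) → (L i j).natDegree ≤ p) ∧
        P = L * Jmat r * Lᵀ} := by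
  ext P
  simp only [Set.mem_ofPred_eq, forall_lt_iff_forall_inl, forall_ge_iff_forall_inr]
  constructor
  · rintro ⟨U, V, hU, hV, rfl⟩
    refine ⟨fromColsRev V (-U), ?_, ?_, ?_⟩
    · simpa only [fromColsRev_apply_inl] using hV
    · simpa only [fromColsRev_apply_inr, Matrix.neg_apply, natDegree_neg] using hU
    · simp [fromColsRev_mul_Jmat_mul_transpose, neg_add_eq_sub]
  · rintro ⟨L, hLeft, hRight, rfl⟩
    obtain ⟨A, B, rfl⟩ := exists_fromColsRev_eq L
    refine ⟨-B, A, ?_, ?_, ?_⟩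
    · simpa only [fromColsRev_apply_inr, Matrix.neg_apply, natDegree_neg] using hRight
    · simpa only [fromColsRev_apply_inl] using hLeft
    · simp [fromColsRev_mul_Jmat_mul_transpose, neg_add_eq_sub]

/-- The set of matrix polynomials `U Vᵀ − V Uᵀ`, with `U` of grade ⌊d/2⌋ and `V` of
grade ⌈d/2⌉, coincides with the set of matrix polynomials `L J₂ᵣ Lᵀ` where the first `r`
columns of `L` have degree at most ⌈d/2⌉ and the last `r` columns have degree at
most ⌊d/2⌋. -/
theorem factorization_sets_eq (m r d : ℕ)
    (hd : 1 ≤ d) (h2 : 2 ≤ 2 * r) (hrm : 2 * r ≤ m - 1) :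
    {P : Matrix (Fin m) (Fin m) (Polynomial ℂ) |
      ∃ U V : Matrix (Fin m) (Fin r) (Polynomial ℂ),
        (∀ i j, (U i j).natDegree ≤ d / 2) ∧
        (∀ i j, (V i j).natDegree ≤ (d + 1) / 2) ∧
        P = U * Vᵀ - V * Uᵀ} =
    {P : Matrix (Fin m) (Fin m) (Polynomial ℂ) |
      ∃ L : Matrix (Fin m) (Fin (2 * r)) (Polynomial ℂ),
        (∀ (i : Fin m) (j : Fin (2 * r)), (j : ℕ) < r → (L i j).natDegree ≤ (d + 1) / 2) ∧
        (∀ (i : Fin m) (j : Fin (2 * r)), r ≤ (j : ℕ) → (L i j).natDegree ≤ d / 2) ∧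
        P = L * Jmat r * Lᵀ} :=
  factorization_sets_eq_general (Fin m) r (d / 2) ((d + 1) / 2)
end

section
/- Let P be an m×m skew-symmetric matrix polynomial over ℂ with normal rank exactly 2r. Then there exist an m×2r matrix polynomial L and a 2r×2r matrix polynomial E such that: (a) P = L E Lᵀ; (b) E is skew-symmetric with normal rank 2r; (c) L is a minimal basis (Forney's criterion: L(λ₀) has rank 2r for every λ₀ ∈ ℂ and the high-order coefficient matrix of L has rank 2r); and (d) the ℂ(λ)-span of the columns of L equals the ℂ(λ)-span of the columns of P. -/
open Polynomial Matrix

/-- The normal rank of a matrix polynomial: its rank as a matrix over the field of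
rational functions ℂ(λ). -/
noncomputable def normalRank {m n : ℕ} (P : Matrix (Fin m) (Fin n) (Polynomial ℂ)) : ℕ :=
  (P.map (algebraMap (Polynomial ℂ) (RatFunc ℂ))).rank

/-- The degree of the `j`-th column of a matrix polynomial: the maximum of the degrees
of its entries. -/
noncomputable def colDegree {m k : ℕ} (L : Matrix (Fin m) (Fin k) (Polynomial ℂ))
    (j : Fin k) : ℕ :=
  Finset.univ.sup fun i => (L i j).natDegree

/-- The high-order coefficient matrix of a matrix polynomial: its `j`-th column consists
of the coefficients of `λ ^ (colDegree L j)` in the `j`-th column of `L`. -/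
noncomputable def highCoeff {m k : ℕ} (L : Matrix (Fin m) (Fin k) (Polynomial ℂ)) :
    Matrix (Fin m) (Fin k) ℂ :=
  Matrix.of fun i j => (L i j).coeff (colDegree L j)

/-- Forney's criterion: an m×k matrix polynomial is a minimal basis iff all its
evaluations have rank `k` and its high-order coefficient matrix has rank `k`. -/
def IsMinimalBasis {m k : ℕ} (L : Matrix (Fin m) (Fin k) (Polynomial ℂ)) : Prop :=
  (∀ α : ℂ, (L.map (Polynomial.eval α)).rank = k) ∧ (highCoeff L).rank = k

/-- The ℂ(λ)-span of the columns of a matrix polynomial. -/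
noncomputable def colSpace {m k : ℕ} (A : Matrix (Fin m) (Fin k) (Polynomial ℂ)) :
    Submodule (RatFunc ℂ) (Fin m → RatFunc ℂ) :=
  Submodule.span (RatFunc ℂ)
    (Set.range fun j i => algebraMap (Polynomial ℂ) (RatFunc ℂ) (A i j))

/-!
Among the matrix polynomials with `2r` columns spanning the column space of `P`, let `L` have
the least sum of column degrees. A vector in the kernel of some `L(α)`, or of the high-order
coefficient matrix, would allow a column of `L` to be replaced by one of smaller degree, so `L` is
a minimal basis. Since `L` has full column rank at every maximal ideal of `ℂ[X]`, it has a
polynomial left inverse `R`. Then `L * R` fixes the columns of `P` and, by skew-symmetry of `P`,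
its transpose fixes the rows, whence `P = (L * R) * P * (L * R)ᵀ = L * E * Lᵀ` for the
skew-symmetric `E = R * P * Rᵀ`.
-/

section LinearAlgebra

variable {m n : Type*} [Fintype n]

theorem rank_eq_card_iff_mulVec_injective {K : Type*} [Field K] {A : Matrix m n K} :
    A.rank = Fintype.card n ↔ Function.Injective A.mulVec := by
  rw [mulVec_injective_iff, linearIndependent_iff_card_eq_finrank_span,
    rank_eq_finrank_span_cols, eq_comm, Set.finrank]

theorem mulVec_injective_of_map {R S : Type*} [NonAssocSemiring R] [NonAssocSemiring S]
    {f : R →+* S} (hf : Function.Injective f) {A : Matrix m n R}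
    (hA : Function.Injective (A.map f).mulVec) : Function.Injective A.mulVec := by
  intro u v huv
  refine hf.comp_left (hA ?_)
  ext i
  simp only [← RingHom.map_mulVec, huv]

theorem mul_mul_eq_of_range_mulVecLin_le {R l : Type*} [CommSemiring R] [Fintype l]
    [Fintype m] [DecidableEq n] {A : Matrix m n R} {B : Matrix n m R}
    (hBA : B * A = 1) {Q : Matrix m l R}
    (hQ : LinearMap.range Q.mulVecLin ≤ LinearMap.range A.mulVecLin) : A * B * Q = Q := by
  classical
  refine ext_of_mulVec_single fun j => ?_
  obtain ⟨x, hx⟩ : ∃ x, A *ᵥ x = Q *ᵥ Pi.single j 1 := hQ ⟨Pi.single j 1, rfl⟩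
  calc (A * B * Q) *ᵥ Pi.single j 1 = (A * (B * A)) *ᵥ x := by
        rw [← mulVec_mulVec, ← hx, mulVec_mulVec, Matrix.mul_assoc]
    _ = Q *ᵥ Pi.single j 1 := by rw [hBA, Matrix.mul_one, hx]

theorem range_mulVecLin_updateCol_mulVec {R : Type*} [CommRing R] [DecidableEq n]
    (A : Matrix m n R) {j : n} {c : n → R} (hc : IsUnit (c j)) :
    LinearMap.range (A.updateCol j (A *ᵥ c)).mulVecLin = LinearMap.range A.mulVecLin := by
  have hfactor : A.updateCol j (A *ᵥ c) = A * (1 : Matrix n n R).updateCol j c := by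
    rw [mul_updateCol, Matrix.mul_one]
  have hdet : ((1 : Matrix n n R).updateCol j c).det = c j := by
    rw [← cramer_apply, cramer_one, Module.End.one_apply]
  have hsurj : Function.Surjective ((1 : Matrix n n R).updateCol j c).mulVec :=
    mulVec_surjective_iff_isUnit.2 ((isUnit_iff_isUnit_det _).2 (hdet ▸ hc))
  rw [hfactor, mulVecLin_mul]
  exact LinearMap.range_comp_of_range_eq_top _ (LinearMap.range_eq_top.2 hsurj)

theorem mul_mul_transpose_eq_of_mul_eq {R : Type*} [CommRing R] {P Q : Matrix n n R}
    (hP : Pᵀ = -P) (hQP : Q * P = P) : Q * P * Qᵀ = P := by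
  have hPQ : P * Qᵀ = P := by
    have := congrArg transpose hQP
    rwa [transpose_mul, hP, Matrix.neg_mul, neg_inj] at this
  rw [hQP, hPQ]

theorem transpose_mul_mul_transpose_eq_neg {R : Type*} [CommRing R] {P : Matrix n n R}
    (hP : Pᵀ = -P) (A : Matrix m n R) : (A * P * Aᵀ)ᵀ = -(A * P * Aᵀ) := by
  rw [transpose_mul, transpose_mul, transpose_transpose, hP, Matrix.neg_mul, Matrix.mul_neg,
    Matrix.mul_assoc]

end LinearAlgebra

section LeftInverse

variable {m n : Type*} [Fintype m] [Fintype n] [DecidableEq n]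

/-- If the rows of `A` span a proper submodule, it lies in the kernel of a nonzero functional
`ψ` with values in some `R ⧸ I`, and the vector of values `ψ eⱼ` is killed by `A` modulo `I`. -/
theorem exists_mul_eq_one_of_forall_isMaximal {R : Type*} [CommRing R] (A : Matrix m n R)
    (hA : ∀ I : Ideal R, I.IsMaximal →
      Function.Injective (A.map (Ideal.Quotient.mk I)).mulVec) :
    ∃ B : Matrix n m R, B * A = 1 := by
  rw [← vecMul_surjective_iff_exists_left_inverse]
  change Function.Surjective A.vecMulLinear
  rw [← LinearMap.range_eq_top]
  by_contra hne
  obtain ⟨N, hN, hle⟩ := (eq_top_or_exists_le_coatom _).resolve_left hne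
  obtain ⟨I, hI, ⟨e⟩⟩ := isSimpleModule_iff_quot_maximal.1 (isSimpleModule_iff_isCoatom.2 hN)
  let ψ : (n → R) →ₗ[R] R ⧸ I := e.toLinearMap ∘ₗ N.mkQ
  have hker : LinearMap.ker ψ = N := by
    rw [LinearEquiv.ker_comp, Submodule.ker_mkQ]
  let c : n → R ⧸ I := fun j => ψ (Pi.single j 1)
  have hψ (v : n → R) : ψ v = ∑ j, Ideal.Quotient.mk I (v j) * c j := by
    conv_lhs => rw [pi_eq_sum_univ' v, map_sum]
    exact Finset.sum_congr rfl fun j _ => map_smul ψ (v j) (Pi.single j 1)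
  have hrow (i : m) : ψ (A.row i) = 0 := by
    rw [← LinearMap.mem_ker, hker]
    classical exact hle ⟨Pi.single i 1, single_one_vecMul i A⟩
  have hc : c = 0 := by
    refine hA I hI (Eq.trans ?_ (mulVec_zero _).symm)
    ext1 i
    exact (hψ (A.row i)).symm.trans (hrow i)
  refine hN.1 (hker ▸ LinearMap.ker_eq_top.2 (LinearMap.ext fun v => ?_))
  simp [hψ, hc]

theorem exists_eq_ker_evalRingHom_of_isMaximal {K : Type*} [Field K] [IsAlgClosed K]
    {I : Ideal K[X]} (hI : I.IsMaximal) : ∃ α : K, I = RingHom.ker (evalRingHom α) := by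
  obtain ⟨p, rfl⟩ := IsPrincipalIdealRing.principal I
  have hp : p.degree ≠ 0 := fun h =>
    hI.ne_top (Ideal.span_singleton_eq_top.2 (isUnit_iff_degree_eq_zero.2 h))
  obtain ⟨α, hα⟩ := IsAlgClosed.exists_root p hp
  refine ⟨α, hI.eq_of_le (RingHom.ker_ne_top _) ?_⟩
  exact (Ideal.span_singleton_le_iff_mem _).2 hα

theorem exists_mul_eq_one_of_forall_eval {K : Type*} [Field K] [IsAlgClosed K]
    (A : Matrix m n K[X]) (hA : ∀ α : K, Function.Injective (A.map (eval α)).mulVec) :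
    ∃ B : Matrix n m K[X], B * A = 1 := by
  refine exists_mul_eq_one_of_forall_isMaximal A fun I hI => ?_
  obtain ⟨α, rfl⟩ := exists_eq_ker_evalRingHom_of_isMaximal hI
  exact mulVec_injective_of_map (RingHom.kerLift_injective (evalRingHom α)) (hA α)

end LeftInverse

section ColumnSpace

variable {m n k : ℕ}

theorem colSpace_eq_range_mulVecLin (A : Matrix (Fin m) (Fin n) ℂ[X]) :
    colSpace A = LinearMap.range (A.map (algebraMap ℂ[X] (RatFunc ℂ))).mulVecLin :=
  (range_mulVecLin _).symm

theorem finrank_colSpace (A : Matrix (Fin m) (Fin n) ℂ[X]) :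
    Module.finrank (RatFunc ℂ) (colSpace A) = normalRank A := by
  rw [colSpace_eq_range_mulVecLin, normalRank, rank]

theorem normalRank_mul_mul_le {l : ℕ} (A : Matrix (Fin m) (Fin n) ℂ[X])
    (B : Matrix (Fin n) (Fin k) ℂ[X]) (D : Matrix (Fin k) (Fin l) ℂ[X]) :
    normalRank (A * B * D) ≤ normalRank B := by
  simp only [normalRank, Matrix.map_mul]
  exact (rank_mul_le_left _ _).trans (rank_mul_le_right _ _)

theorem mulVec_injective_of_normalRank_eq {L : Matrix (Fin m) (Fin k) ℂ[X]}
    (hL : normalRank L = k) : Function.Injective L.mulVec := by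
  have hinj : Function.Injective (L.map (algebraMap ℂ[X] (RatFunc ℂ))).mulVec :=
    rank_eq_card_iff_mulVec_injective.1 (hL.trans (Fintype.card_fin k).symm)
  exact mulVec_injective_of_map (IsFractionRing.injective ℂ[X] (RatFunc ℂ)) hinj

theorem mul_mul_eq_of_colSpace_le {L : Matrix (Fin m) (Fin k) ℂ[X]}
    {R : Matrix (Fin k) (Fin m) ℂ[X]} (hRL : R * L = 1) {Q : Matrix (Fin m) (Fin n) ℂ[X]}
    (hQ : colSpace Q ≤ colSpace L) : L * R * Q = Q := by
  let φ := algebraMap ℂ[X] (RatFunc ℂ)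
  have hφRL : R.map φ * L.map φ = 1 := by
    rw [← Matrix.map_mul, hRL, Matrix.map_one φ (map_zero φ) (map_one φ)]
  rw [colSpace_eq_range_mulVecLin, colSpace_eq_range_mulVecLin] at hQ
  refine map_injective (IsFractionRing.injective ℂ[X] (RatFunc ℂ)) ?_
  simpa only [Matrix.map_mul] using mul_mul_eq_of_range_mulVecLin_le hφRL hQ

theorem colSpace_updateCol {L : Matrix (Fin m) (Fin k) ℂ[X]} {j : Fin k} {q : ℂ[X]}
    {w : Fin m → ℂ[X]} {u : Fin k → ℂ[X]} (hq : q ≠ 0) (hu : u j ≠ 0) (h : q • w = L *ᵥ u) :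
    colSpace (L.updateCol j w) = colSpace L := by
  let φ := algebraMap ℂ[X] (RatFunc ℂ)
  have hφ {p : ℂ[X]} (hp : p ≠ 0) : φ p ≠ 0 := RatFunc.algebraMap_ne_zero hp
  have hw : φ ∘ w = L.map φ *ᵥ ((φ q)⁻¹ • (φ ∘ u)) := by
    rw [mulVec_smul, eq_inv_smul_iff₀ (hφ hq)]
    funext i
    rw [← RingHom.map_mulVec, ← h]
    simp
  rw [colSpace_eq_range_mulVecLin, colSpace_eq_range_mulVecLin, map_updateCol, hw]
  exact range_mulVecLin_updateCol_mulVec _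
    (mul_ne_zero (inv_ne_zero (hφ hq)) (hφ hu)).isUnit

theorem exists_colSpace_submatrix_eq (P : Matrix (Fin m) (Fin n) ℂ[X]) :
    ∃ g : Fin (normalRank P) → Fin n, colSpace (P.submatrix id g) = colSpace P := by
  rw [← finrank_colSpace, colSpace]
  obtain ⟨f, hf, hspan, -⟩ := Submodule.exists_fun_fin_finrank_span_eq (RatFunc ℂ)
    (Set.range fun j i => algebraMap ℂ[X] (RatFunc ℂ) (P i j))
  choose g hg using hf
  exact ⟨g, (congrArg (fun v => Submodule.span _ (Set.range v)) (funext hg)).trans hspan⟩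

end ColumnSpace

section MinimalOrder

variable {m n k : ℕ}

theorem natDegree_le_colDegree (L : Matrix (Fin m) (Fin k) ℂ[X]) (i : Fin m) (j : Fin k) :
    (L i j).natDegree ≤ colDegree L j :=
  Finset.le_sup (f := fun i => (L i j).natDegree) (Finset.mem_univ i)

theorem degree_mulVec_le {L : Matrix (Fin m) (Fin k) ℂ[X]} {u : Fin k → ℂ[X]} {d : ℕ}
    (hu : ∀ l, u l ≠ 0 → colDegree L l + (u l).natDegree ≤ d) (i : Fin m) :
    ((L *ᵥ u) i).degree ≤ d := by
  refine (degree_sum_le Finset.univ fun l => L i l * u l).trans (Finset.sup_le fun l _ => ?_)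
  by_cases hl : u l = 0
  · rw [hl, mul_zero, degree_zero]
    exact bot_le
  · refine degree_le_of_natDegree_le (natDegree_mul_le.trans ?_)
    exact (Nat.add_le_add_right (natDegree_le_colDegree L i l) _).trans (hu l hl)

theorem coeff_mulVec_C_mul_X_pow {L : Matrix (Fin m) (Fin k) ℂ[X]} {c : Fin k → ℂ} {d : ℕ}
    (hd : ∀ l, c l ≠ 0 → colDegree L l ≤ d) (i : Fin m) :
    ((L *ᵥ fun l => C (c l) * X ^ (d - colDegree L l)) i).coeff d = (highCoeff L *ᵥ c) i := by
  simp only [mulVec, dotProduct, finsetSum_coeff]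
  refine Finset.sum_congr rfl fun l _ => ?_
  by_cases hl : c l = 0
  · simp [hl]
  · rw [← mul_assoc, coeff_mul_X_pow', if_pos (Nat.sub_le _ _), coeff_mul_C,
      Nat.sub_sub_self (hd l hl), highCoeff, of_apply]

theorem sum_colDegree_updateCol_lt {L : Matrix (Fin m) (Fin k) ℂ[X]} {j : Fin k}
    {w : Fin m → ℂ[X]} (hw : w ≠ 0) (hdeg : ∀ i, (w i).degree < colDegree L j) :
    ∑ l, colDegree (L.updateCol j w) l < ∑ l, colDegree L l := by
  have hpos : 0 < colDegree L j := by
    obtain ⟨i, hi⟩ := Function.ne_iff.1 hw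
    exact_mod_cast (zero_le_degree_iff.2 hi).trans_lt (hdeg i)
  have hj : colDegree (L.updateCol j w) j < colDegree L j := by
    refine (Finset.sup_lt_iff hpos).2 fun i _ => ?_
    rw [updateCol_self]
    by_cases hi : w i = 0
    · rwa [hi, natDegree_zero]
    · exact (natDegree_lt_iff_degree_lt hi).2 (hdeg i)
  refine Finset.sum_lt_sum (fun l _ => ?_) ⟨j, Finset.mem_univ j, hj⟩
  obtain rfl | hl := eq_or_ne l j
  · exact hj.le
  · simp only [colDegree, updateCol_ne hl, le_refl]

/-- The order of a matrix polynomial, the sum of its column degrees, is least among the matrix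
polynomials with the same number of columns and the same column space. -/
def HasMinimalOrder (L : Matrix (Fin m) (Fin k) ℂ[X]) : Prop :=
  ∀ L' : Matrix (Fin m) (Fin k) ℂ[X], colSpace L' = colSpace L →
    ∑ j, colDegree L j ≤ ∑ j, colDegree L' j

theorem exists_hasMinimalOrder (P : Matrix (Fin m) (Fin n) ℂ[X]) :
    ∃ L : Matrix (Fin m) (Fin (normalRank P)) ℂ[X], colSpace L = colSpace P ∧
      HasMinimalOrder L := by
  obtain ⟨g, hg⟩ := exists_colSpace_submatrix_eq P
  let S := {L : Matrix (Fin m) (Fin (normalRank P)) ℂ[X] | colSpace L = colSpace P}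
  obtain ⟨L, hL, hmin⟩ := exists_minimalFor_of_wellFoundedLT (· ∈ S)
    (fun L => ∑ j, colDegree L j) ⟨_, hg⟩
  exact ⟨L, hL, fun L' hL' => (le_total _ _).elim id (hmin (hL'.trans hL))⟩

namespace HasMinimalOrder

variable {L : Matrix (Fin m) (Fin k) ℂ[X]}

theorem exists_colDegree_le_degree (hmin : HasMinimalOrder L) (hL : normalRank L = k)
    {j : Fin k} {q : ℂ[X]} {w : Fin m → ℂ[X]} {u : Fin k → ℂ[X]} (hq : q ≠ 0) (hu : u j ≠ 0)
    (h : q • w = L *ᵥ u) : ∃ i, (colDegree L j : WithBot ℕ) ≤ (w i).degree := by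
  by_contra! hdeg
  have hw : w ≠ 0 := by
    rintro rfl
    have : u = 0 := mulVec_injective_of_normalRank_eq hL (by rw [← h, smul_zero, mulVec_zero])
    exact hu (congrFun this j)
  exact (hmin _ (colSpace_updateCol hq hu h)).not_gt (sum_colDegree_updateCol_lt hw hdeg)

/-- If `L(α) c = 0`, then `(L c) / (X - α)` may replace a column of largest degree among those
with `c l ≠ 0`. -/
theorem mulVec_eval_injective (hmin : HasMinimalOrder L) (hL : normalRank L = k) (α : ℂ) :
    Function.Injective (L.map (eval α)).mulVec := by
  refine (injective_iff_map_eq_zero (L.map (eval α)).mulVecLin).2 fun c hc => ?_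
  by_contra hc0
  obtain ⟨j, hj, hmax⟩ := Set.exists_max_image c.support (colDegree L) (Set.toFinite _)
    (Function.support_nonempty_iff.2 hc0)
  have hdvd (i : Fin m) : X - C α ∣ (L *ᵥ (C ∘ c)) i := by
    have heval : eval α ∘ C ∘ c = c := by ext; simp
    rw [dvd_iff_isRoot, IsRoot, ← coe_evalRingHom, RingHom.map_mulVec, coe_evalRingHom, heval]
    exact congrFun hc i
  choose w hw using hdvd
  have hsmul : (X - C α) • w = L *ᵥ (C ∘ c) := by
    ext1 i
    exact (hw i).symm
  obtain ⟨i, hi⟩ :=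
    hmin.exists_colDegree_le_degree hL (X_sub_C_ne_zero α) (C_ne_zero.2 hj) hsmul
  have hdeg : ((L *ᵥ (C ∘ c)) i).degree ≤ colDegree L j := degree_mulVec_le
    (fun l hl => by simpa using hmax l (C_ne_zero.1 hl)) i
  rw [hw, degree_mul, degree_X_sub_C] at hdeg
  have hlt : 1 + colDegree L j ≤ colDegree L j := by
    exact_mod_cast (add_le_add_right hi 1).trans hdeg
  omega

/-- If `Lₕ c = 0`, then the combination of the columns `X ^ (d - dₗ) Lₗ` with coefficients `c l`,
where `d` is the largest `dₗ` with `c l ≠ 0`, has no term of degree `d`. -/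
theorem mulVec_highCoeff_injective (hmin : HasMinimalOrder L) (hL : normalRank L = k) :
    Function.Injective (highCoeff L).mulVec := by
  refine (injective_iff_map_eq_zero (highCoeff L).mulVecLin).2 fun c hc => ?_
  by_contra hc0
  obtain ⟨j, hj, hmax⟩ := Set.exists_max_image c.support (colDegree L) (Set.toFinite _)
    (Function.support_nonempty_iff.2 hc0)
  let u : Fin k → ℂ[X] := fun l => C (c l) * X ^ (colDegree L j - colDegree L l)
  have hu {l : Fin k} : u l ≠ 0 ↔ c l ≠ 0 := by simp [u]
  obtain ⟨i, hi⟩ := hmin.exists_colDegree_le_degree hL one_ne_zero (hu.2 hj)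
    (one_smul _ (L *ᵥ u))
  have hdeg : ((L *ᵥ u) i).degree ≤ colDegree L j := by
    refine degree_mulVec_le (fun l hl => ?_) i
    rw [natDegree_C_mul_X_pow _ _ (hu.1 hl), Nat.add_sub_cancel' (hmax l (hu.1 hl))]
  refine coeff_ne_zero_of_eq_degree (hdeg.antisymm hi) ?_
  rw [coeff_mulVec_C_mul_X_pow hmax]
  exact congrFun hc i

theorem isMinimalBasis (hmin : HasMinimalOrder L) (hL : normalRank L = k) : IsMinimalBasis L := by
  refine ⟨fun α => ?_, ?_⟩
  · simpa using rank_eq_card_iff_mulVec_injective.2 (hmin.mulVec_eval_injective hL α)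
  · simpa using rank_eq_card_iff_mulVec_injective.2 (hmin.mulVec_highCoeff_injective hL)

end HasMinimalOrder

end MinimalOrder

theorem IsMinimalBasis.exists_mul_eq_one {m k : ℕ} {L : Matrix (Fin m) (Fin k) ℂ[X]}
    (hL : IsMinimalBasis L) : ∃ R : Matrix (Fin k) (Fin m) ℂ[X], R * L = 1 :=
  exists_mul_eq_one_of_forall_eval L fun α =>
    rank_eq_card_iff_mulVec_injective.1 ((hL.1 α).trans (Fintype.card_fin k).symm)

/-- Every skew-symmetric matrix polynomial of normal rank exactly `2r` factors as
`L E Lᵀ` with `L` a minimal basis of the column space of `P` and `E` skew-symmetric of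
normal rank `2r`. -/
theorem skew_symmetric_minimal_rank_factorization (m r : ℕ)
    (P : Matrix (Fin m) (Fin m) (Polynomial ℂ)) (hP : Pᵀ = -P)
    (hrk : normalRank P = 2 * r) :
    ∃ (L : Matrix (Fin m) (Fin (2 * r)) (Polynomial ℂ))
      (E : Matrix (Fin (2 * r)) (Fin (2 * r)) (Polynomial ℂ)),
      P = L * E * Lᵀ ∧
      Eᵀ = -E ∧
      normalRank E = 2 * r ∧
      IsMinimalBasis L ∧
      colSpace L = colSpace P := by
  rw [← hrk]
  obtain ⟨L, hLP, hmin⟩ := exists_hasMinimalOrder P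
  have hL : normalRank L = normalRank P := by rw [← finrank_colSpace, hLP, finrank_colSpace]
  have hbasis : IsMinimalBasis L := hmin.isMinimalBasis hL
  obtain ⟨R, hRL⟩ := hbasis.exists_mul_eq_one
  have hLRP : L * R * P = P := mul_mul_eq_of_colSpace_le hRL hLP.ge
  have hfactor : L * (R * P * Rᵀ) * Lᵀ = P := by
    simpa only [transpose_mul, Matrix.mul_assoc] using mul_mul_transpose_eq_of_mul_eq hP hLRP
  refine ⟨L, R * P * Rᵀ, hfactor.symm, transpose_mul_mul_transpose_eq_neg hP R, ?_, hbasis, hLP⟩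
  refine le_antisymm (normalRank_mul_mul_le R P Rᵀ) ?_
  calc normalRank P = normalRank (L * (R * P * Rᵀ) * Lᵀ) := by rw [hfactor]
    _ ≤ normalRank (R * P * Rᵀ) := normalRank_mul_mul_le _ _ _
end

section
/- Let P be an m×m skew-symmetric matrix polynomial over ℂ of grade d with normal rank exactly 2r, degree exactly d, and no eigenvalues (finite or infinite). Suppose P = L E Lᵀ where L is an m×2r matrix polynomial that is a minimal basis whose columns span (over ℂ(λ)) the column space of P, E is a 2r×2r skew-symmetric matrix polynomial of normal rank 2r, and the columns of L are ordered so that their degrees are nonincreasing: deg(L₁) ≥ deg(L₂) ≥ ⋯ ≥ deg(L₂ᵣ). Then deg(Lᵢ) + deg(L₂ᵣ₋ᵢ₊₁) = d for every i = 1, …, 2r. -/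
open Polynomial Matrix

/-!
Multiplication by a column reduced matrix cannot cancel leading terms (Forney's predictable degree
property). Let `P = L E Mᵀ` with `L` and `M` column reduced of column degrees `δ` and `ε`. Applying
the property on both sides shows that the entries of `F = diag(λ ^ δᵢ) E diag(λ ^ εᵢ)` have degree
at most `d`, and that the `d`-th coefficient matrix of `P` is that of `F` multiplied by the
high-order coefficient matrices of `L` and `Mᵀ`. So `E i j = 0` whenever `δᵢ + εⱼ > d`; if
`δᵢ + ε_{k+1-i} > d` for some `i`, the monotonicity of `δ` and `ε` makes this zero block too large
for `det E ≠ 0`. On the other hand, `P` has no finite eigenvalues, so `det E` is a nonzero constant,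
and no infinite ones, so `det F` has degree exactly `k d`. Hence `∑ δᵢ + ∑ εᵢ = k d`, and none of
the inequalities `δᵢ + ε_{k+1-i} ≤ d` can be strict.
-/

section ColumnReduced

variable {R ι κ ν : Type*}

/-- The coefficient matrix of `L` whose `j`-th column is taken at degree `δ j`. It is the
high-order coefficient matrix of `L` when `δ` lists the column degrees. -/
def colCoeff [Semiring R] (δ : κ → ℕ) (L : Matrix ι κ R[X]) : Matrix ι κ R :=
  Matrix.of fun i j => (L i j).coeff (δ j)

/-- `L` is column reduced with column degrees `δ`: the columns have degrees at most `δ`, and the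
coefficients at these degrees form a matrix with linearly independent columns. Over a nontrivial
ring the second condition forces `δ j` to be the degree of the `j`-th column, so that `δ` can be
a parameter instead of being computed from `L`. -/
structure IsColumnReduced [Semiring R] [Fintype κ] (L : Matrix ι κ R[X]) (δ : κ → ℕ) : Prop where
  natDegree_le : ∀ i j, (L i j).natDegree ≤ δ j
  mulVec_injective : Function.Injective (colCoeff δ L).mulVec

/-- The matrix `diag(X ^ δ j) * B`: when `B` is multiplied from the left by a matrix with column
degrees `δ`, this accounts for the degree which the `j`-th column contributes. -/
noncomputable def rowShift [Semiring R] [Fintype κ] [DecidableEq κ] (δ : κ → ℕ)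
    (B : Matrix κ ν R[X]) : Matrix κ ν R[X] :=
  (diagonal fun j => X ^ δ j : Matrix κ κ R[X]) * B

/-- The matrix `diag(X ^ δ i) * E * diag(X ^ ε j)`, the analogue of `rowShift` for the middle
factor of a product of three matrices. -/
noncomputable def rowColShift [Semiring R] [Fintype ι] [DecidableEq ι] [Fintype κ] [DecidableEq κ]
    (δ : ι → ℕ) (ε : κ → ℕ) (E : Matrix ι κ R[X]) : Matrix ι κ R[X] :=
  rowShift δ E * (diagonal fun j => X ^ ε j : Matrix κ κ R[X])

section Semiring

variable [Semiring R] [Fintype κ] [DecidableEq κ] {L : Matrix ι κ R[X]} {B : Matrix κ ν R[X]}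
  {δ : κ → ℕ} {d : ℕ}

theorem coeff_mul_apply_eq_colCoeff_mulVec (hL : ∀ i j, (L i j).natDegree ≤ δ j) {b : ν}
    (hB : ∀ j, (rowShift δ B j b).natDegree ≤ d) (a : ι) :
    ((L * B) a b).coeff d = (colCoeff δ L *ᵥ fun j => (rowShift δ B j b).coeff d) a := by
  simp only [mul_apply, finsetSum_coeff, mulVec, dotProduct]
  refine Finset.sum_congr rfl fun j _ => ?_
  calc (L a j * B j b).coeff d
      = (L a j * B j b * X ^ δ j).coeff (d + δ j) := (coeff_mul_X_pow _ _ _).symm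
    _ = (L a j * rowShift δ B j b).coeff (δ j + d) := by
      rw [rowShift, diagonal_mul, X_pow_mul, mul_assoc, add_comm]
    _ = (L a j).coeff (δ j) * (rowShift δ B j b).coeff d :=
      coeff_mul_add_eq_of_natDegree_le (hL a j) (hB j)

theorem map_coeff_mul_eq_colCoeff_mul (hL : ∀ i j, (L i j).natDegree ≤ δ j)
    (hB : ∀ j b, (rowShift δ B j b).natDegree ≤ d) :
    (L * B).map (coeff · d) = colCoeff δ L * (rowShift δ B).map (coeff · d) := by
  ext a b
  exact coeff_mul_apply_eq_colCoeff_mulVec hL (fun j => hB j b) a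

theorem IsColumnReduced.natDegree_rowShift_le (hL : IsColumnReduced L δ)
    (hLB : ∀ a b, ((L * B) a b).natDegree ≤ d) (j : κ) (b : ν) :
    (rowShift δ B j b).natDegree ≤ d := by
  have : Nonempty κ := ⟨j⟩
  obtain ⟨p, hp⟩ := Finite.exists_max fun j => (rowShift δ B j b).natDegree
  refine (hp j).trans ?_
  by_contra! hlt
  -- The top coefficients of column `b` would form a nonzero vector killed by `colCoeff δ L`.
  have hcoeff_zero : (fun j => (rowShift δ B j b).coeff (rowShift δ B p b).natDegree) = 0 := by
    refine hL.mulVec_injective (funext fun a => ?_)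
    rw [← coeff_mul_apply_eq_colCoeff_mulVec hL.natDegree_le hp, mulVec_zero, Pi.zero_apply]
    exact coeff_eq_zero_of_natDegree_lt ((hLB a b).trans_lt hlt)
  have hp_zero : rowShift δ B p b = 0 := leadingCoeff_eq_zero.1 (congrFun hcoeff_zero p)
  simp [hp_zero] at hlt

end Semiring

section CommSemiring

variable [CommSemiring R] [Fintype ι] [DecidableEq ι] [Fintype κ]

theorem transpose_rowShift_mul_transpose (δ : ι → ℕ) (E : Matrix ι κ R[X])
    (M : Matrix ν κ R[X]) : (rowShift δ (E * Mᵀ))ᵀ = M * (rowShift δ E)ᵀ := by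
  rw [rowShift, rowShift, ← Matrix.mul_assoc, transpose_mul, transpose_transpose]

variable [DecidableEq κ]

theorem rowColShift_apply (δ : ι → ℕ) (ε : κ → ℕ) (E : Matrix ι κ R[X]) (i : ι) (j : κ) :
    rowColShift δ ε E i j = E i j * X ^ (δ i + ε j) := by
  rw [rowColShift, mul_diagonal, rowShift, diagonal_mul]
  ring

theorem transpose_rowColShift (δ : ι → ℕ) (ε : κ → ℕ) (E : Matrix ι κ R[X]) :
    (rowColShift δ ε E)ᵀ = rowShift ε (rowShift δ E)ᵀ := by
  rw [rowColShift, transpose_mul, diagonal_transpose]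
  rfl

variable {μ : Type*} {L : Matrix μ ι R[X]} {E : Matrix ι κ R[X]} {M : Matrix ν κ R[X]}
  {δ : ι → ℕ} {ε : κ → ℕ} {d : ℕ}

theorem IsColumnReduced.natDegree_rowColShift_le (hL : IsColumnReduced L δ)
    (hM : IsColumnReduced M ε) (hLEM : ∀ a b, ((L * E * Mᵀ) a b).natDegree ≤ d) (i : ι) (j : κ) :
    (rowColShift δ ε E i j).natDegree ≤ d := by
  rw [← transpose_apply (rowColShift δ ε E), transpose_rowColShift]
  refine hM.natDegree_rowShift_le (fun b i => ?_) j i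
  rw [← transpose_rowShift_mul_transpose]
  exact hL.natDegree_rowShift_le (fun a b => Matrix.mul_assoc L E Mᵀ ▸ hLEM a b) i b

theorem IsColumnReduced.map_coeff_mul_mul_transpose (hL : IsColumnReduced L δ)
    (hM : IsColumnReduced M ε) (hLEM : ∀ a b, ((L * E * Mᵀ) a b).natDegree ≤ d) :
    (L * E * Mᵀ).map (coeff · d) =
      colCoeff δ L * (rowColShift δ ε E).map (coeff · d) * (colCoeff ε M)ᵀ := by
  have hrow : ∀ i b, (rowShift δ (E * Mᵀ) i b).natDegree ≤ d :=
    hL.natDegree_rowShift_le fun a b => Matrix.mul_assoc L E Mᵀ ▸ hLEM a b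
  have hrow_coeff : (rowShift δ (E * Mᵀ)).map (coeff · d) =
      (rowColShift δ ε E).map (coeff · d) * (colCoeff ε M)ᵀ := by
    apply transpose_injective
    rw [transpose_mul, transpose_transpose, ← transpose_map, ← transpose_map, transpose_rowColShift,
      transpose_rowShift_mul_transpose]
    refine map_coeff_mul_eq_colCoeff_mul hM.natDegree_le fun j i => ?_
    rw [← transpose_rowColShift]
    exact hL.natDegree_rowColShift_le hM hLEM i j
  rw [Matrix.mul_assoc, map_coeff_mul_eq_colCoeff_mul hL.natDegree_le hrow, hrow_coeff,
    Matrix.mul_assoc]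

theorem add_le_of_natDegree_rowColShift_le {i : ι} {j : κ} (hE : E i j ≠ 0)
    (hd : (rowColShift δ ε E i j).natDegree ≤ d) : δ i + ε j ≤ d := by
  have : Nontrivial R := Polynomial.nontrivial_iff.1 ⟨_, _, hE⟩
  rw [rowColShift_apply, natDegree_mul_X_pow _ hE] at hd
  exact le_of_add_le_right hd

end CommSemiring

end ColumnReduced

section Determinant

variable {R κ : Type*} [CommRing R] [Fintype κ] [DecidableEq κ]

theorem det_rowColShift (δ ε : κ → ℕ) (E : Matrix κ κ R[X]) :
    (rowColShift δ ε E).det = E.det * X ^ (∑ i, δ i + ∑ i, ε i) := by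
  simp only [rowColShift, rowShift, det_mul, det_diagonal, Finset.prod_pow_eq_pow_sum]
  ring

theorem coeff_det_card_mul {F : Matrix κ κ R[X]} {d : ℕ} (hF : ∀ i j, (F i j).natDegree ≤ d) :
    F.det.coeff (Fintype.card κ * d) = (F.map (coeff · d)).det := by
  simp only [det_apply, finsetSum_coeff, coeff_smul, map_apply]
  refine Finset.sum_congr rfl fun σ _ => congrArg _ ?_
  exact coeff_prod_of_natDegree_le (s := Finset.univ) _ d fun i _ => hF (σ i) i

theorem sum_add_sum_eq_card_mul {δ ε : κ → ℕ} {E : Matrix κ κ R[X]} {d : ℕ}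
    (hE : E.det.natDegree = 0) (hdeg : ∀ i j, (rowColShift δ ε E i j).natDegree ≤ d)
    (hcoeff : ((rowColShift δ ε E).map (coeff · d)).det ≠ 0) :
    ∑ i, δ i + ∑ i, ε i = Fintype.card κ * d := by
  rw [← coeff_det_card_mul hdeg, det_rowColShift, eq_C_of_natDegree_eq_zero hE,
    coeff_C_mul_X_pow] at hcoeff
  by_contra hne
  exact hcoeff (if_neg (Ne.symm hne))

theorem exists_perm_of_det_ne_zero {E : Matrix κ κ R} (hE : E.det ≠ 0) :
    ∃ σ : Equiv.Perm κ, ∀ j, E (σ j) j ≠ 0 := by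
  contrapose! hE
  rw [det_apply]
  refine Finset.sum_eq_zero fun σ _ => ?_
  obtain ⟨j, hj⟩ := hE σ
  rw [Finset.prod_eq_zero (f := fun j => E (σ j) j) (Finset.mem_univ j) hj, smul_zero]

theorem exists_le_rev_map_le {k : ℕ} (σ : Equiv.Perm (Fin k)) (i : Fin k) :
    ∃ j ≤ i.rev, σ j ≤ i := by
  by_contra! hlt
  have hcard : (Finset.Iic i.rev).card ≤ (Finset.Ioi i).card :=
    Finset.card_le_card_of_injOn σ (fun j hj => by simpa using hlt j (by simpa using hj))
      σ.injective.injOn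
  rw [Fin.card_Iic, Fin.card_Ioi, Fin.val_rev] at hcard
  omega

theorem exists_le_le_rev_ne_zero_of_det_ne_zero {k : ℕ} {E : Matrix (Fin k) (Fin k) R}
    (hE : E.det ≠ 0) (i : Fin k) : ∃ a ≤ i, ∃ b ≤ i.rev, E a b ≠ 0 := by
  obtain ⟨σ, hσ⟩ := exists_perm_of_det_ne_zero hE
  obtain ⟨j, hj, hσj⟩ := exists_le_rev_map_le σ i
  exact ⟨σ j, hσj, j, hj, hσ j⟩

theorem add_rev_le_of_antitone {k d : ℕ} {δ ε : Fin k → ℕ} {E : Matrix (Fin k) (Fin k) R[X]}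
    (hδ : Antitone δ) (hε : Antitone ε) (hE : E.det ≠ 0)
    (hdeg : ∀ i j, (rowColShift δ ε E i j).natDegree ≤ d) (i : Fin k) :
    δ i + ε i.rev ≤ d := by
  obtain ⟨a, ha, b, hb, hab⟩ := exists_le_le_rev_ne_zero_of_det_ne_zero hE i
  exact (add_le_add (hδ ha) (hε hb)).trans (add_le_of_natDegree_rowColShift_le hab (hdeg a b))

end Determinant

theorem add_rev_eq_of_sum_eq {k d : ℕ} {δ ε : Fin k → ℕ} (hle : ∀ i, δ i + ε i.rev ≤ d)
    (hsum : ∑ i, δ i + ∑ i, ε i = k * d) (i : Fin k) : δ i + ε i.rev = d := by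
  have hrev : ∑ i, ε (Fin.rev i) = ∑ i, ε i := Equiv.sum_comp Fin.revPerm ε
  have htotal : ∑ i, (δ i + ε i.rev) = ∑ _i : Fin k, d := by
    rw [Finset.sum_add_distrib, hrev, hsum, Fin.sum_const, smul_eq_mul]
  exact (Finset.sum_eq_sum_iff_of_le fun i _ => hle i).1 htotal i (Finset.mem_univ i)

section Field

variable {K ι κ ν : Type*} [Field K] [Fintype κ] [Fintype ν]

theorem mulVec_injective_of_rank_eq_card {A : Matrix ι κ K} (hA : A.rank = Fintype.card κ) :
    Function.Injective A.mulVec := by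
  rw [mulVec_injective_iff, linearIndependent_iff_card_eq_finrank_span, ← hA]
  exact A.rank_eq_finrank_span_cols

variable [DecidableEq κ]

theorem det_ne_zero_of_rank_eq_card {A : Matrix κ κ K} (hA : A.rank = Fintype.card κ) :
    A.det ≠ 0 := by
  rw [← isUnit_iff_ne_zero, ← isUnit_iff_isUnit_det, ← mulVec_injective_iff_isUnit]
  exact mulVec_injective_of_rank_eq_card hA

theorem det_ne_zero_of_rank_mul_mul_eq_card {A : Matrix ι κ K} {B : Matrix κ κ K}
    {C : Matrix κ ν K} (hABC : (A * B * C).rank = Fintype.card κ) : B.det ≠ 0 := by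
  refine det_ne_zero_of_rank_eq_card (B.rank_le_card_width.antisymm ?_)
  calc Fintype.card κ = (A * B * C).rank := hABC.symm
    _ ≤ (A * B).rank := rank_mul_le_left _ _
    _ ≤ B.rank := rank_mul_le_right _ _

theorem isUnit_det_of_rank_map_eval_mul_mul_eq_card [IsAlgClosed K] {A : Matrix ι κ K[X]}
    {E : Matrix κ κ K[X]} {B : Matrix κ ν K[X]}
    (h : ∀ α : K, ((A * E * B).map (eval α)).rank = Fintype.card κ) : IsUnit E.det := by
  rw [isUnit_iff_degree_eq_zero]
  by_contra hdeg
  obtain ⟨α, hα⟩ := IsAlgClosed.exists_root E.det hdeg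
  have hmap : (A * E * B).map (eval α) = A.map (eval α) * E.map (eval α) * B.map (eval α) := by
    simp only [← coe_evalRingHom, Matrix.map_mul]
  refine det_ne_zero_of_rank_mul_mul_eq_card (hmap ▸ h α) ?_
  exact ((evalRingHom α).map_det E).symm.trans hα

end Field

theorem colDegree_add_colDegree_rev_eq_general {K ι ν : Type*} [Field K] [IsAlgClosed K]
    [Fintype ν] {k d : ℕ} {P : Matrix ι ν K[X]} {L : Matrix ι (Fin k) K[X]}
    {E : Matrix (Fin k) (Fin k) K[X]} {M : Matrix ν (Fin k) K[X]} {δ ε : Fin k → ℕ}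
    (hgrade : ∀ a b, (P a b).natDegree ≤ d)
    (hnoeig : ∀ α : K, (P.map (eval α)).rank = k)
    (hnoinf : (P.map (coeff · d)).rank = k)
    (hfact : P = L * E * Mᵀ)
    (hL : IsColumnReduced L δ) (hM : IsColumnReduced M ε) (hδ : Antitone δ) (hε : Antitone ε)
    (i : Fin k) : δ i + ε i.rev = d := by
  subst hfact
  have hEdet : IsUnit E.det :=
    isUnit_det_of_rank_map_eval_mul_mul_eq_card (by simpa only [Fintype.card_fin] using hnoeig)
  have hdeg : ∀ i j, (rowColShift δ ε E i j).natDegree ≤ d :=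
    hL.natDegree_rowColShift_le hM hgrade
  have hcoeff : ((rowColShift δ ε E).map (coeff · d)).det ≠ 0 := by
    rw [hL.map_coeff_mul_mul_transpose hM hgrade] at hnoinf
    exact det_ne_zero_of_rank_mul_mul_eq_card (hnoinf.trans (Fintype.card_fin k).symm)
  have hsum : ∑ i, δ i + ∑ i, ε i = k * d := by
    simpa only [Fintype.card_fin] using
      sum_add_sum_eq_card_mul (natDegree_eq_zero_of_isUnit hEdet) hdeg hcoeff
  exact add_rev_eq_of_sum_eq (add_rev_le_of_antitone hδ hε hEdet.ne_zero hdeg) hsum i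

theorem IsMinimalBasis.isColumnReduced {m k : ℕ} {L : Matrix (Fin m) (Fin k) ℂ[X]}
    (hL : IsMinimalBasis L) : IsColumnReduced L (colDegree L) where
  natDegree_le i j := Finset.le_sup (f := fun i => (L i j).natDegree) (Finset.mem_univ i)
  mulVec_injective := mulVec_injective_of_rank_eq_card (hL.2.trans (Fintype.card_fin k).symm)

/-- For a skew-symmetric matrix polynomial of grade `d`, normal rank exactly `2r`,
degree exactly `d`, and with no (finite or infinite) eigenvalues, any minimal-basis
factorization `P = L E Lᵀ` with nonincreasing column degrees of `L` satisfies
`deg(Lᵢ) + deg(L₂ᵣ₋ᵢ₊₁) = d` for all `i`. -/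
theorem colDegree_add_colDegree_rev_eq (m r d : ℕ)
    (P : Matrix (Fin m) (Fin m) (Polynomial ℂ)) (hP : Pᵀ = -P)
    (hgrade : ∀ i j, (P i j).natDegree ≤ d)
    (hdeg : (Matrix.of fun a b => (P a b).coeff d) ≠ (0 : Matrix (Fin m) (Fin m) ℂ))
    (hrk : normalRank P = 2 * r)
    (hnoeig : ∀ α : ℂ, (P.map (Polynomial.eval α)).rank = 2 * r)
    (hnoinf : (Matrix.of fun a b => (P a b).coeff d).rank = 2 * r)
    (L : Matrix (Fin m) (Fin (2 * r)) (Polynomial ℂ))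
    (E : Matrix (Fin (2 * r)) (Fin (2 * r)) (Polynomial ℂ))
    (hfact : P = L * E * Lᵀ)
    (hE : Eᵀ = -E) (hErk : normalRank E = 2 * r)
    (hL : IsMinimalBasis L)
    (hspan : colSpace L = colSpace P)
    (hord : ∀ i j : Fin (2 * r), i ≤ j → colDegree L j ≤ colDegree L i) :
    ∀ i : Fin (2 * r), colDegree L i + colDegree L i.rev = d := by
  exact colDegree_add_colDegree_rev_eq_general hgrade hnoeig hnoinf hfact hL.isColumnReduced
    hL.isColumnReduced hord hord
end

section
/- Let m, r, d be integers with m > 2, d ≥ 1, and 2 ≤ 2r ≤ m−1. Then every m×m skew-symmetric matrix polynomial P over ℂ of grade d with normal rank at most 2r is the coefficientwise limit of a sequence (Pₙ) of m×m skew-symmetric matrix polynomials of grade d such that each Pₙ has degree exactly d, normal rank exactly 2r, and no eigenvalues (finite or infinite), i.e., rank Pₙ(α) = 2r for every α ∈ ℂ and the d-th coefficient matrix of Pₙ has rank 2r. -/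
open Polynomial Matrix

/-- The tuple of coefficient matrices of a matrix polynomial of grade `d`. -/
noncomputable def coeffTuple (m d : ℕ) (P : Matrix (Fin m) (Fin m) (Polynomial ℂ)) :
    Fin (d + 1) → Matrix (Fin m) (Fin m) ℂ :=
  fun i => Matrix.of fun a b => (P a b).coeff (i : ℕ)

/-!
An alternating matrix polynomial `P` of grade `d` and rank at most `2r` factors as `Wᵀ J W`, where
`J` is the standard symplectic form of rank `2r` and the degrees allowed to the two rows of `W` in
each hyperbolic pair add up to `d`. To see this, view `P` as an alternating map between sums of
line bundles `𝒪(a i)` on the projective line. If it degenerates at some point, finite or infinite,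
an elementary modification there raises one of the weights `a i`. Otherwise its determinant is a
nonzero constant and the total weight is zero, so `P` has a nonzero constant entry whose two
indices have weights adding up to `d`, and this pivot splits off a hyperbolic pair.

Since `W` has more columns than rows, there is a matrix with the same row degrees two of whose
maximal minors have no common zero on the projective line. By nonvanishing of the resultant, the
same minors have no common zero for all but finitely many matrices on the line joining `W` to it;
these have full row rank everywhere, and the corresponding matrices `Wᵀ J W` tend to `P` along the
line.
-/

section IntDegree

variable {R : Type*} [CommRing R] {c e : ℤ} {p q : R[X]}

/-- The polynomials of degree at most the integer `c`; this is `⊥` when `c < 0`. Allowing negative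
bounds makes the degree bounds of a matrix polynomial additive in row and column weights. -/
def intDegreeLE (R : Type*) [CommRing R] (c : ℤ) : Submodule R R[X] where
  carrier := {p | ∀ n : ℕ, c < n → p.coeff n = 0}
  zero_mem' _ _ := coeff_zero _
  add_mem' hp hq n hn := by rw [coeff_add, hp n hn, hq n hn, add_zero]
  smul_mem' k _ hp n hn := by rw [coeff_smul, hp n hn, smul_zero]

/-- The coefficient of `X ^ c` for an integer exponent `c`, which is `0` when `c < 0`. -/
noncomputable def intCoeff (R : Type*) [CommRing R] (c : ℤ) : R[X] →ₗ[R] R :=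
  if 0 ≤ c then lcoeff R c.toNat else 0

lemma intCoeff_natCast (n : ℕ) (p : R[X]) : intCoeff R n p = p.coeff n := by
  simp [intCoeff]

lemma intCoeff_of_neg (hc : c < 0) : intCoeff R c = 0 :=
  if_neg hc.not_ge

lemma intDegreeLE_mono (hce : c ≤ e) : intDegreeLE R c ≤ intDegreeLE R e :=
  fun _ hp n hn => hp n (hce.trans_lt hn)

lemma mem_intDegreeLE_natCast {n : ℕ} : p ∈ intDegreeLE R n ↔ p.natDegree ≤ n := by
  rw [natDegree_le_iff_coeff_eq_zero]
  exact forall_congr' fun k => by rw [Nat.cast_lt]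

lemma C_mem_intDegreeLE_zero (z : R) : C z ∈ intDegreeLE R 0 :=
  mem_intDegreeLE_natCast.2 (natDegree_C z).le

lemma eq_C_of_mem_intDegreeLE_zero (hp : p ∈ intDegreeLE R 0) : p = C (p.coeff 0) :=
  eq_C_of_natDegree_le_zero (mem_intDegreeLE_natCast.1 hp)

lemma eq_zero_of_mem_intDegreeLE (hp : p ∈ intDegreeLE R c) (hc : c < 0) : p = 0 :=
  Polynomial.ext fun n => hp n (by lia)

lemma mul_mem_intDegreeLE (hp : p ∈ intDegreeLE R c) (hq : q ∈ intDegreeLE R e) :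
    p * q ∈ intDegreeLE R (c + e) := by
  intro n hn
  rw [coeff_mul]
  refine Finset.sum_eq_zero fun ⟨k, l⟩ hkl => ?_
  rw [Finset.HasAntidiagonal.mem_antidiagonal] at hkl
  by_cases hk : c < k
  · rw [hp k hk, zero_mul]
  · rw [hq l (by lia), mul_zero]

lemma intCoeff_mul (hp : p ∈ intDegreeLE R c) (hq : q ∈ intDegreeLE R e) :
    intCoeff R (c + e) (p * q) = intCoeff R c p * intCoeff R e q := by
  rcases lt_or_ge c 0 with hc | hc
  · simp [eq_zero_of_mem_intDegreeLE hp hc]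
  rcases lt_or_ge e 0 with he | he
  · simp [eq_zero_of_mem_intDegreeLE hq he]
  lift c to ℕ using hc
  lift e to ℕ using he
  rw [← Nat.cast_add, intCoeff_natCast, intCoeff_natCast, intCoeff_natCast]
  exact coeff_mul_add_eq_of_natDegree_le (mem_intDegreeLE_natCast.1 hp)
    (mem_intDegreeLE_natCast.1 hq)

lemma prod_mem_intDegreeLE {ι : Type*} {s : Finset ι} {c : ι → ℤ} {f : ι → R[X]}
    (h : ∀ i ∈ s, f i ∈ intDegreeLE R (c i)) : ∏ i ∈ s, f i ∈ intDegreeLE R (∑ i ∈ s, c i) := by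
  classical
  induction s using Finset.induction_on with
  | empty => simpa using C_mem_intDegreeLE_zero (1 : R)
  | insert i s hi ih =>
    rw [Finset.sum_insert hi, Finset.prod_insert hi]
    exact mul_mem_intDegreeLE (h i (Finset.mem_insert_self i s))
      (ih fun j hj => h j (Finset.mem_insert_of_mem hj))

lemma intCoeff_prod {ι : Type*} {s : Finset ι} {c : ι → ℤ} {f : ι → R[X]}
    (h : ∀ i ∈ s, f i ∈ intDegreeLE R (c i)) :
    intCoeff R (∑ i ∈ s, c i) (∏ i ∈ s, f i) = ∏ i ∈ s, intCoeff R (c i) (f i) := by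
  classical
  induction s using Finset.induction_on with
  | empty => simp [intCoeff]
  | insert i s hi ih =>
    have hs : ∀ j ∈ s, f j ∈ intDegreeLE R (c j) := fun j hj => h j (Finset.mem_insert_of_mem hj)
    rw [Finset.sum_insert hi, Finset.prod_insert hi, Finset.prod_insert hi,
      intCoeff_mul (h i (Finset.mem_insert_self i s)) (prod_mem_intDegreeLE hs), ih hs]

lemma mem_intDegreeLE_sub_one (hp : p ∈ intDegreeLE R c) (h0 : intCoeff R c p = 0) :
    p ∈ intDegreeLE R (c - 1) := by
  intro n hn
  rcases (show c ≤ n by lia).lt_or_eq with hcn | rfl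
  · exact hp n hcn
  · rwa [intCoeff_natCast] at h0

lemma mem_intDegreeLE_of_X_sub_C_mul_mem [IsDomain R] {α : R}
    (h : (X - C α) * p ∈ intDegreeLE R c) : p ∈ intDegreeLE R (c - 1) := by
  rcases eq_or_ne p 0 with rfl | hp
  · exact zero_mem _
  have hdeg : ((X - C α) * p).natDegree = 1 + p.natDegree := by
    rw [natDegree_mul (X_sub_C_ne_zero α) hp, natDegree_X_sub_C]
  have hle : (((X - C α) * p).natDegree : ℤ) ≤ c := not_lt.1 fun hlt =>
    mul_ne_zero (X_sub_C_ne_zero α) hp (leadingCoeff_eq_zero.1 (h _ hlt))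
  exact intDegreeLE_mono (by lia) (mem_intDegreeLE_natCast.2 le_rfl)

end IntDegree

section DegreeWeights

variable {R : Type*} [CommRing R] {l m n : Type*}

/-- The entry `(i, j)` of `M` has degree at most `a i - b j`: in other words `M` is a morphism of
bundles `⨁ j, 𝒪(b j) ⟶ ⨁ i, 𝒪(a i)` on the projective line. -/
def HasDegreeLE (a : m → ℤ) (b : n → ℤ) (M : Matrix m n R[X]) : Prop :=
  ∀ i j, M i j ∈ intDegreeLE R (a i - b j)

/-- The coefficients of `M` of the top degrees allowed by `HasDegreeLE a b`, which is the value
of `M` at infinity. -/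
noncomputable def leadingMatrix (a : m → ℤ) (b : n → ℤ) (M : Matrix m n R[X]) : Matrix m n R :=
  of fun i j => intCoeff R (a i - b j) (M i j)

variable {a : l → ℤ} {b : m → ℤ} {c : n → ℤ} {A : Matrix l m R[X]} {B : Matrix m n R[X]}

lemma HasDegreeLE.transpose (hB : HasDegreeLE b c B) (d : ℤ) :
    HasDegreeLE (fun j => d - c j) (fun i => d - b i) Bᵀ := by
  intro j i
  rw [sub_sub_sub_cancel_left]
  exact hB i j

lemma leadingMatrix_transpose (b : m → ℤ) (c : n → ℤ) (B : Matrix m n R[X]) (d : ℤ) :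
    leadingMatrix (fun j => d - c j) (fun i => d - b i) Bᵀ = (leadingMatrix b c B)ᵀ := by
  ext j i
  simp only [leadingMatrix, of_apply, transpose_apply, sub_sub_sub_cancel_left]

lemma HasDegreeLE.mulVec [Fintype m] (hA : HasDegreeLE a b A) {e : ℤ} {x : m → R[X]}
    (hx : ∀ q, x q ∈ intDegreeLE R (b q - e)) (i : l) :
    (A *ᵥ x) i ∈ intDegreeLE R (a i - e) :=
  sum_mem fun q _ => by
    rw [← sub_add_sub_cancel (a i) (b q) e]
    exact mul_mem_intDegreeLE (hA i q) (hx q)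

lemma HasDegreeLE.intCoeff_mulVec [Fintype m] (hA : HasDegreeLE a b A) {e : ℤ} {x : m → R[X]}
    (hx : ∀ q, x q ∈ intDegreeLE R (b q - e)) (i : l) :
    intCoeff R (a i - e) ((A *ᵥ x) i)
      = (leadingMatrix a b A *ᵥ fun q => intCoeff R (b q - e) (x q)) i := by
  simp only [Matrix.mulVec, dotProduct, map_sum]
  refine Finset.sum_congr rfl fun q _ => ?_
  rw [← sub_add_sub_cancel (a i) (b q) e]
  exact intCoeff_mul (hA i q) (hx q)

lemma HasDegreeLE.mul [Fintype m] (hA : HasDegreeLE a b A) (hB : HasDegreeLE b c B) :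
    HasDegreeLE a c (A * B) :=
  fun i j => hA.mulVec (fun q => hB q j) i

lemma HasDegreeLE.leadingMatrix_mul [Fintype m] (hA : HasDegreeLE a b A)
    (hB : HasDegreeLE b c B) :
    leadingMatrix a c (A * B) = leadingMatrix a b A * leadingMatrix b c B := by
  ext i j
  exact hA.intCoeff_mulVec (fun q => hB q j) i

lemma sum_sub_sum_eq_sum_perm [Fintype n] (a b : n → ℤ) (σ : Equiv.Perm n) :
    ∑ i, a i - ∑ i, b i = ∑ i, (a (σ i) - b i) := by
  rw [Finset.sum_sub_distrib, Equiv.sum_comp σ a]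

variable [Fintype n] [DecidableEq n] {a b : n → ℤ} {M : Matrix n n R[X]}

lemma HasDegreeLE.det_mem (hM : HasDegreeLE a b M) :
    M.det ∈ intDegreeLE R (∑ i, a i - ∑ i, b i) := by
  rw [det_apply]
  refine sum_mem fun σ _ => ?_
  rw [Units.smul_def, sum_sub_sum_eq_sum_perm a b σ]
  exact zsmul_mem (prod_mem_intDegreeLE fun i _ => hM (σ i) i) _

lemma HasDegreeLE.intCoeff_det (hM : HasDegreeLE a b M) :
    intCoeff R (∑ i, a i - ∑ i, b i) M.det = (leadingMatrix a b M).det := by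
  rw [det_apply, det_apply, map_sum]
  refine Finset.sum_congr rfl fun σ _ => ?_
  rw [Units.smul_def, map_zsmul, sum_sub_sum_eq_sum_perm a b σ,
    intCoeff_prod fun i _ => hM (σ i) i]
  rfl

end DegreeWeights

section Alternating

variable {R : Type*} [CommRing R] {m n : Type*} [Fintype m] [Fintype n]

/-- The matrix of an alternating bilinear form; away from characteristic `2` these are the
skew-symmetric matrices. -/
def IsAlternating (S : Matrix n n R) : Prop :=
  ∀ x : n → R, x ⬝ᵥ S *ᵥ x = 0

lemma dotProduct_congruence_mulVec (S : Matrix m m R) (N : Matrix m n R) (x y : n → R) :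
    x ⬝ᵥ (Nᵀ * S * N) *ᵥ y = (N *ᵥ x) ⬝ᵥ S *ᵥ (N *ᵥ y) := by
  rw [Matrix.mul_assoc, ← mulVec_mulVec, dotProduct_mulVec, vecMul_transpose, mulVec_mulVec]

lemma IsAlternating.congruence {S : Matrix m m R} (hS : IsAlternating S) (N : Matrix m n R) :
    IsAlternating (Nᵀ * S * N) := fun x => by
  rw [dotProduct_congruence_mulVec, hS]

lemma IsAlternating.submatrix {S : Matrix n n R} (hS : IsAlternating S) (f : m → n) :
    IsAlternating (S.submatrix f f) := by
  classical
  have key := hS.congruence ((1 : Matrix n n R).submatrix id f)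
  rwa [transpose_submatrix, transpose_one, ← Equiv.coe_refl, one_submatrix_mul, mul_submatrix_one,
    submatrix_submatrix] at key

lemma IsAlternating.add {S T : Matrix n n R} (hS : IsAlternating S) (hT : IsAlternating T) :
    IsAlternating (S + T) := fun x => by
  rw [add_mulVec, dotProduct_add, hS, hT, add_zero]

lemma isAlternating_vecMulVec_sub (u v : n → R) :
    IsAlternating (vecMulVec v u - vecMulVec u v) := fun x => by
  simp only [sub_mulVec, vecMulVec_mulVec, dotProduct_sub, op_smul_eq_smul, dotProduct_smul,
    smul_eq_mul]
  rw [dotProduct_comm x u, dotProduct_comm x v]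
  ring

variable {S : Matrix n n R}

lemma IsAlternating.apply_self (hS : IsAlternating S) (i : n) : S i i = 0 := by
  classical
  simpa using hS (Pi.single i 1)

lemma IsAlternating.transpose_eq_neg (hS : IsAlternating S) : Sᵀ = -S := by
  classical
  ext i j
  have key := hS (Pi.single i 1 + Pi.single j 1)
  simp only [mulVec_add, dotProduct_add, add_dotProduct, mulVec_single_one,
    single_one_dotProduct, col_apply] at key
  exact eq_neg_of_add_eq_zero_left (by simpa [hS.apply_self] using key)

lemma IsAlternating.apply_eq_neg (hS : IsAlternating S) (i j : n) : S i j = -S j i :=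
  congr_fun₂ hS.transpose_eq_neg j i

lemma isAlternating_of_transpose_eq_neg [IsDomain R] (h2 : (2 : R) ≠ 0) (hS : Sᵀ = -S) :
    IsAlternating S := by
  intro x
  have key : x ⬝ᵥ S *ᵥ x = -(x ⬝ᵥ S *ᵥ x) := by
    conv_lhs => rw [dotProduct_mulVec, ← mulVec_transpose, hS, neg_mulVec, neg_dotProduct,
      dotProduct_comm]
  exact (mul_eq_zero.1 ((two_mul _).trans (eq_neg_iff_add_eq_zero.1 key))).resolve_left h2

end Alternating

section GenericRank

variable {K : Type*} [Field K] {m n : Type*} [Fintype n]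

/-- The rank of a matrix polynomial over the field of rational functions; over `ℂ` it is
`normalRank`, but the index types here are arbitrary. -/
noncomputable def genericRank (S : Matrix m n K[X]) : ℕ :=
  (S.map (algebraMap K[X] (RatFunc K))).rank

lemma genericRank_submatrix_le {m₀ n₀ : Type*} [Fintype n₀] (S : Matrix m n K[X]) (f : m₀ → m)
    (g : n₀ → n) : genericRank (S.submatrix f g) ≤ genericRank S :=
  rank_submatrix_le (S.map (algebraMap K[X] (RatFunc K))) f g

lemma genericRank_congruence [DecidableEq n] (S : Matrix n n K[X]) {N : Matrix n n K[X]}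
    (hN : N.det ≠ 0) : genericRank (Nᵀ * S * N) = genericRank S := by
  have hdet : IsUnit (N.map (algebraMap K[X] (RatFunc K))).det := by
    rw [← RingHom.mapMatrix_apply, ← RingHom.map_det]
    exact (map_ne_zero_iff _ (RatFunc.algebraMap_injective K)).2 hN |>.isUnit
  rw [genericRank, Matrix.map_mul, Matrix.map_mul, transpose_map,
    rank_mul_eq_left_of_isUnit_det _ _ hdet,
    rank_mul_eq_right_of_isUnit_det _ _ (by rwa [det_transpose]), genericRank]

lemma rank_mul_add_two_le {S M : Matrix n n K} {i j : n} (hi : ∀ l, (S * M) i l = 0)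
    (hj : ∀ l, (S * M) j l = 0) (hii : S i i = 0) (hij : S i j ≠ 0) (hji : S j i ≠ 0) :
    (S * M).rank + 2 ≤ S.rank := by
  classical
  let ker_i := LinearMap.ker (LinearMap.proj i : (n → K) →ₗ[K] K)
  have col_mem (q : n) : S.col q ∈ LinearMap.range S.mulVecLin :=
    ⟨Pi.single q 1, mulVec_single_one S q⟩
  have row_zero {q : n} (hq : ∀ l, (S * M) q l = 0) (x : n → K) :
      ((S * M) *ᵥ x) q = 0 := by
    simp only [Matrix.mulVec, dotProduct, hq, zero_mul, Finset.sum_const_zero]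
  have h_lower : LinearMap.range (S * M).mulVecLin < LinearMap.range S.mulVecLin ⊓ ker_i := by
    refine SetLike.lt_iff_le_and_exists.2 ⟨le_inf ?_ ?_, S.col i,
      Submodule.mem_inf.2 ⟨col_mem i, hii⟩, ?_⟩
    · rw [mulVecLin_mul]
      exact LinearMap.range_comp_le_range _ _
    · rintro _ ⟨x, rfl⟩
      exact row_zero hi x
    · rintro ⟨x, hx⟩
      exact hji ((congr_fun hx j).symm.trans (row_zero hj x))
  have h_upper : LinearMap.range S.mulVecLin ⊓ ker_i < LinearMap.range S.mulVecLin :=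
    SetLike.lt_iff_le_and_exists.2 ⟨inf_le_left, S.col j, col_mem j, fun h => hij h.2⟩
  have := Submodule.finrank_lt_finrank_of_lt h_lower
  have := Submodule.finrank_lt_finrank_of_lt h_upper
  simp only [Matrix.rank]
  lia

end GenericRank

section SymplecticReduction

variable {R : Type*} [CommRing R] {n : Type*} {S : Matrix n n R} {i j : n} {c : R}

/-- The Schur complement of the principal block of an alternating matrix `S` on the indices `i`
and `j`, where `c` is the inverse of the pivot `S i j`. -/
def symplecticReduction (S : Matrix n n R) (i j : n) (c : R) : Matrix n n R :=
  S + (vecMulVec (c • S.col j) (S.col i) - vecMulVec (S.col i) (c • S.col j))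

lemma symplecticReduction_add (S : Matrix n n R) (i j : n) (c : R) :
    symplecticReduction S i j c
      + (vecMulVec (S.col i) (c • S.col j) - vecMulVec (c • S.col j) (S.col i)) = S := by
  rw [symplecticReduction]
  abel

variable [Fintype n]

lemma IsAlternating.symplecticReduction (hS : IsAlternating S) (i j : n) (c : R) :
    IsAlternating (symplecticReduction S i j c) :=
  hS.add (isAlternating_vecMulVec_sub _ _)

lemma symplecticReduction_eq_mul [DecidableEq n] (S : Matrix n n R) (i j : n) (c : R) :
    symplecticReduction S i j c
      = S * (1 + (vecMulVec (Pi.single j c) (S.col i)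
        - vecMulVec (Pi.single i 1) (c • S.col j))) := by
  rw [mul_add, mul_one, mul_sub, mul_vecMulVec, mul_vecMulVec, mulVec_single_one, mulVec_single,
    op_smul_eq_smul, symplecticReduction]

lemma IsAlternating.symplecticReduction_apply_left (hS : IsAlternating S) (hc : c * S i j = 1)
    (l : n) : _root_.symplecticReduction S i j c i l = 0 := by
  simp only [_root_.symplecticReduction, Matrix.add_apply, Matrix.sub_apply,
    vecMulVec_apply, Pi.smul_apply, col_apply, smul_eq_mul, hS.apply_self, hc,
    hS.apply_eq_neg i l]
  ring

lemma IsAlternating.symplecticReduction_apply_right (hS : IsAlternating S) (hc : c * S i j = 1)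
    (l : n) : _root_.symplecticReduction S i j c j l = 0 := by
  simp only [_root_.symplecticReduction, Matrix.add_apply, Matrix.sub_apply,
    vecMulVec_apply, Pi.smul_apply, col_apply, smul_eq_mul, hS.apply_self,
    hS.apply_eq_neg j i, hS.apply_eq_neg j l]
  linear_combination S l j * hc

lemma genericRank_symplecticReduction_add_two_le {K : Type*} [Field K] {S : Matrix n n K[X]}
    {c : K[X]} (hS : IsAlternating S) (hc : c * S i j = 1) :
    genericRank (symplecticReduction S i j c) + 2 ≤ genericRank S := by
  classical
  have hij : algebraMap K[X] (RatFunc K) (S i j) ≠ 0 :=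
    (map_ne_zero_iff _ (RatFunc.algebraMap_injective K)).2 (right_ne_zero_of_mul_eq_one hc)
  have hmap {q : n} (hq : ∀ l, symplecticReduction S i j c q l = 0) (l : n) :
      (symplecticReduction S i j c).map (algebraMap K[X] (RatFunc K)) q l = 0 := by
    rw [map_apply, hq, map_zero]
  have hi := hmap (hS.symplecticReduction_apply_left hc)
  have hj := hmap (hS.symplecticReduction_apply_right hc)
  rw [genericRank, genericRank]
  rw [symplecticReduction_eq_mul, Matrix.map_mul] at hi hj ⊢
  refine rank_mul_add_two_le hi hj ?_ hij ?_
  · rw [map_apply, hS.apply_self, map_zero]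
  · rwa [map_apply, hS.apply_eq_neg, map_neg, neg_ne_zero]

end SymplecticReduction

section SymplecticFactorization

variable {R : Type*} [CommRing R] {m n : Type*} {d r : ℕ} {a : n → ℤ}

/-- `S` is the pullback of the standard symplectic form of rank `2 * r` along a matrix polynomial
whose two rows in the `i`-th hyperbolic pair have degree weights `b (inl i)` and `b (inr i)` adding
up to `d`. -/
def HasSymplecticFactorization (d r : ℕ) (a : n → ℤ) (S : Matrix n n R[X]) : Prop :=
  ∃ (b : Fin r ⊕ Fin r → ℕ) (W : Matrix (Fin r ⊕ Fin r) n R[X]),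
    (∀ s, b s + b s.swap = d) ∧ HasDegreeLE (fun s => (b s : ℤ)) a W ∧
      S = Wᵀ * J (Fin r) R[X] * W

lemma HasSymplecticFactorization.zero (d r : ℕ) (a : n → ℤ) :
    HasSymplecticFactorization d r a (0 : Matrix n n R[X]) :=
  ⟨Sum.elim 0 fun _ => d, 0, by rintro (i | i) <;> simp, fun _ _ => zero_mem _, by simp⟩

lemma HasSymplecticFactorization.congruence [Fintype m] {a' : m → ℤ} {S : Matrix m m R[X]}
    (hS : HasSymplecticFactorization d r a' S) {N : Matrix m n R[X]} (hN : HasDegreeLE a' a N) :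
    HasSymplecticFactorization d r a (Nᵀ * S * N) := by
  obtain ⟨b, W, hb, hW, rfl⟩ := hS
  refine ⟨b, W * N, hb, hW.mul hN, ?_⟩
  simp only [transpose_mul, Matrix.mul_assoc]

lemma transpose_mul_J_mul_apply {ι : Type*} [Fintype ι] [DecidableEq ι]
    (W : Matrix (ι ⊕ ι) n R) (k l : n) :
    (Wᵀ * J ι R * W) k l
      = ∑ i, (W (.inr i) k * W (.inl i) l - W (.inl i) k * W (.inr i) l) := by
  simp only [J, mul_apply, Fintype.sum_sum_type, fromBlocks_apply₁₁, fromBlocks_apply₁₂,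
    fromBlocks_apply₂₁, fromBlocks_apply₂₂, transpose_apply, Matrix.zero_apply, Matrix.neg_apply,
    one_apply]
  simp [Finset.sum_add_distrib, sub_eq_add_neg, add_comm]

lemma HasSymplecticFactorization.add_hyperbolic {S : Matrix n n R[X]}
    (hS : HasSymplecticFactorization d r a S) {p q : ℕ} (hpq : p + q = d) {x y : n → R[X]}
    (hx : ∀ l, x l ∈ intDegreeLE R (p - a l)) (hy : ∀ l, y l ∈ intDegreeLE R (q - a l)) :
    HasSymplecticFactorization d (r + 1) a (S + (vecMulVec y x - vecMulVec x y)) := by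
  obtain ⟨b, W, hb, hW, rfl⟩ := hS
  refine ⟨Sum.elim (Fin.cons p fun i => b (.inl i)) (Fin.cons q fun i => b (.inr i)),
    of (Sum.elim (Fin.cons x fun i => W.row (.inl i)) (Fin.cons y fun i => W.row (.inr i))),
    ?_, ?_, ?_⟩
  · rintro (i | i) <;> cases i using Fin.cases
    · exact hpq
    · exact hb _
    · exact (add_comm _ _).trans hpq
    · exact hb _
  · rintro (i | i) <;> cases i using Fin.cases
    · exact hx
    · exact hW _
    · exact hy
    · exact hW _
  · ext1 k l
    rw [Matrix.add_apply, transpose_mul_J_mul_apply, transpose_mul_J_mul_apply,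
      Fin.sum_univ_succ]
    simp [vecMulVec_apply, add_comm]

end SymplecticFactorization

section Deletion

variable {R : Type*} [CommRing R] {n : Type*} [Fintype n] {d r : ℕ} {a : n → ℤ}
  {S : Matrix n n R[X]}

lemma HasSymplecticFactorization.of_submatrix_ne {j : n} (hS : IsAlternating S)
    (hj : ∀ l, S j l = 0)
    (h : HasSymplecticFactorization d r (fun l : {l // l ≠ j} => a l)
      (S.submatrix (↑) (↑))) : HasSymplecticFactorization d r a S := by
  classical
  obtain ⟨b, W, hb, hW, hSW⟩ := h
  refine ⟨b, of fun s l => if hl : l ≠ j then W s ⟨l, hl⟩ else 0, hb, fun s l => ?_, ?_⟩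
  · rw [of_apply]
    split_ifs with hl
    · exact hW s ⟨l, hl⟩
    · exact zero_mem _
  · ext1 k l
    rw [transpose_mul_J_mul_apply]
    by_cases hk : k = j
    · simp [hk, hj]
    by_cases hl : l = j
    · simp [hl, hS.apply_eq_neg k, hj]
    have key := congr_fun₂ hSW ⟨k, hk⟩ ⟨l, hl⟩
    rw [transpose_mul_J_mul_apply] at key
    simpa [hk, hl] using key

end Deletion

section Pivot

variable {R : Type*} [CommRing R] {n : Type*} {d r : ℕ} {a : n → ℤ} {S : Matrix n n R[X]}
  {i j : n}

lemma HasDegreeLE.symplecticReduction (hS : HasDegreeLE (fun i => d - a i) a S)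
    (hij : a i + a j = d) (c : R) :
    HasDegreeLE (fun i => d - a i) a (symplecticReduction S i j (C c)) := by
  have mul_mem {p q : n} (hpq : a p + a q = d) (k l : n) :
      S k p * S l q ∈ intDegreeLE R (d - a k - a l) := by
    rw [show d - a k - a l = (d - a k - a p) + (d - a l - a q) by lia]
    exact mul_mem_intDegreeLE (hS k p) (hS l q)
  intro k l
  rw [_root_.symplecticReduction, Matrix.add_apply, Matrix.sub_apply, vecMulVec_apply,
    vecMulVec_apply]
  refine add_mem (hS k l) (sub_mem ?_ ?_)
  · rw [Pi.smul_apply, smul_eq_mul, mul_assoc, ← smul_eq_C_mul]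
    exact Submodule.smul_mem _ c (mul_mem ((add_comm _ _).trans hij) k l)
  · rw [Pi.smul_apply, smul_eq_mul, mul_left_comm, ← smul_eq_C_mul]
    exact Submodule.smul_mem _ c (mul_mem hij k l)

lemma HasSymplecticFactorization.of_symplecticReduction (hS : HasDegreeLE (fun i => d - a i) a S)
    (ha : ∀ l, 0 ≤ a l) (hij : a i + a j = d) {c : R}
    (h : HasSymplecticFactorization d r a (symplecticReduction S i j (C c))) :
    HasSymplecticFactorization d (r + 1) a S := by
  have hai : ((a i).toNat : ℤ) = a i := Int.toNat_of_nonneg (ha i)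
  have haj : ((a j).toNat : ℤ) = a j := Int.toNat_of_nonneg (ha j)
  rw [← symplecticReduction_add S i j (C c)]
  refine h.add_hyperbolic (p := (a i).toNat) (q := (a j).toNat) (by lia) (fun l => ?_) fun l => ?_
  · rw [hai, show a i - a l = d - a l - a j by lia, Pi.smul_apply, smul_eq_mul, ← smul_eq_C_mul]
    exact Submodule.smul_mem _ c (hS l j)
  · rw [haj, show a j - a l = d - a l - a i by lia]
    exact hS l i

end Pivot

section Shrinking

variable {R : Type*} [CommRing R] {n : Type*} [Fintype n]

lemma congruence_vecMulVec {m : Type*} (N : Matrix n m R) (u v : n → R) :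
    Nᵀ * vecMulVec u v * N = vecMulVec (u ᵥ* N) (v ᵥ* N) := by
  rw [mul_vecMulVec, vecMulVec_mul, mulVec_transpose]

lemma IsAlternating.vecMul_eq_neg {S : Matrix n n R} (hS : IsAlternating S) (x : n → R) :
    x ᵥ* S = -(S *ᵥ x) := by
  rw [← mulVec_transpose, hS.transpose_eq_neg, neg_mulVec]

variable [DecidableEq n]

lemma IsAlternating.congruence_one_sub_vecMulVec {S : Matrix n n R} (hS : IsAlternating S)
    (x e : n → R) : (1 - vecMulVec x e)ᵀ * S * (1 - vecMulVec x e)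
      = S - vecMulVec (S *ᵥ x) e + vecMulVec e (S *ᵥ x) := by
  have hxSx : (S *ᵥ x) ⬝ᵥ x = 0 := by rw [dotProduct_comm, hS x]
  simp only [transpose_sub, transpose_one, transpose_vecMulVec, sub_mul, one_mul, mul_sub, mul_one,
    vecMulVec_mul, mul_vecMulVec, hS.vecMul_eq_neg, vecMulVec_neg, neg_mulVec, vecMulVec_mulVec,
    hxSx, MulOpposite.op_zero, zero_smul, neg_zero, zero_vecMulVec]
  abel

/-- The alternating matrix obtained from `S` by replacing the `j`-th column by `z` and the
`j`-th row by `-z`. -/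
def replaceRowCol (S : Matrix n n R) (j : n) (z : n → R) : Matrix n n R :=
  (1 - vecMulVec (Pi.single j 1) (Pi.single j 1))ᵀ * S
      * (1 - vecMulVec (Pi.single j 1) (Pi.single j 1))
    + (vecMulVec z (Pi.single j 1) - vecMulVec (Pi.single j 1) z)

lemma IsAlternating.replaceRowCol {S : Matrix n n R} (hS : IsAlternating S) (j : n)
    (z : n → R) : IsAlternating (replaceRowCol S j z) :=
  (hS.congruence _).add (isAlternating_vecMulVec_sub _ _)

lemma replaceRowCol_apply (S : Matrix n n R) (j : n) (z : n → R) (k l : n) :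
    replaceRowCol S j z k l
      = if k = j then (if l = j then 0 else -z l) else if l = j then z k else S k l := by
  by_cases hk : k = j <;> by_cases hl : l = j <;>
    simp [replaceRowCol, sub_mul, mul_sub, transpose_vecMulVec, vecMulVec_mul, mul_vecMulVec,
      vecMulVec_apply, hk, hl]

/-- The change of basis that sends the `j`-th basis vector to `g • e_j - (x - e_j)`, where
`x j = 1`: it undoes the replacement of `e_j` by `x` and then multiplies `e_j` by `g`. -/
def shrinkMatrix (j : n) (x : n → R) (g : R) : Matrix n n R :=
  1 + vecMulVec (g • Pi.single j 1 - x) (Pi.single j 1)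

lemma det_shrinkMatrix {j : n} {x : n → R} (hx : x j = 1) (g : R) :
    (shrinkMatrix j x g).det = g := by
  rw [shrinkMatrix, vecMulVec_eq Unit, det_one_add_replicateCol_mul_replicateRow]
  simp [hx]

lemma congruence_shrinkMatrix {S : Matrix n n R} (hS : IsAlternating S) {j : n} {x z : n → R}
    {g : R} (hx : x j = 1) (hSx : S *ᵥ x = g • z) :
    (shrinkMatrix j x g)ᵀ * replaceRowCol S j z * shrinkMatrix j x g = S := by
  set e : n → R := Pi.single j 1
  set N := shrinkMatrix j x g
  have hN : N = 1 + vecMulVec (g • e - x) e := rfl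
  have he : e ᵥ* N = g • e := by
    simp [hN, e, vecMul_add, vecMul_vecMulVec, sub_smul, hx]
  have hz : ∃ t : R, z ᵥ* N = z + t • e :=
    ⟨z ⬝ᵥ (g • e - x), by rw [hN, vecMul_add, vecMul_one, vecMul_vecMulVec]⟩
  obtain ⟨t, hz⟩ := hz
  have hEN : (1 - vecMulVec e e) * N = 1 - vecMulVec x e := by
    rw [sub_mul, one_mul, vecMulVec_mul, he, hN, sub_vecMulVec, smul_vecMulVec,
      vecMulVec_smul]
    abel
  calc Nᵀ * replaceRowCol S j z * N
    _ = ((1 - vecMulVec e e) * N)ᵀ * S * ((1 - vecMulVec e e) * N)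
        + (vecMulVec (z ᵥ* N) (e ᵥ* N) - vecMulVec (e ᵥ* N) (z ᵥ* N)) := by
      rw [← congruence_vecMulVec, ← congruence_vecMulVec, replaceRowCol, mul_add, add_mul,
        mul_sub (Nᵀ) (vecMulVec z e), sub_mul (Nᵀ * vecMulVec z e)]
      simp only [transpose_mul, Matrix.mul_assoc, e]
    _ = S := by
      rw [hEN, hS.congruence_one_sub_vecMulVec, hSx, he, hz]
      simp only [add_vecMulVec, vecMulVec_add, smul_vecMulVec, vecMulVec_smul, smul_add]
      module

end Shrinking

section ShrinkingDegrees

variable {K : Type*} [Field K] {n : Type*} {d : ℕ} {a : n → ℤ} {S : Matrix n n K[X]} {j : n}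
  {x z : n → K[X]} {g : K[X]}

lemma hasDegreeLE_shrinkMatrix [DecidableEq n] (hx : ∀ q, x q ∈ intDegreeLE K (a q - a j))
    (hg : g ∈ intDegreeLE K 1) : HasDegreeLE (a + Pi.single j 1) a (shrinkMatrix j x g) := by
  intro k l
  have hk : a k ≤ (a + Pi.single j 1 : n → ℤ) k := by
    rw [Pi.add_apply, Pi.single_apply]
    split_ifs <;> lia
  rw [shrinkMatrix, Matrix.add_apply, vecMulVec_apply]
  refine add_mem ?_ ?_
  · rw [one_apply]
    split_ifs with hkl
    · exact intDegreeLE_mono (by subst hkl; lia) (C_mem_intDegreeLE_zero 1)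
    · exact zero_mem _
  · rcases eq_or_ne l j with rfl | hl
    · rw [Pi.single_eq_same, mul_one, Pi.sub_apply, Pi.smul_apply, smul_eq_mul]
      refine sub_mem ?_ (intDegreeLE_mono (by lia) (hx k))
      rcases eq_or_ne k l with rfl | hkl
      · simpa using hg
      · rw [Pi.single_eq_of_ne hkl, mul_zero]
        exact zero_mem _
    · rw [Pi.single_eq_of_ne hl, mul_zero]
      exact zero_mem _

variable [Fintype n]

/-- `S` degenerates at a point of the projective line: it maps some vector `x`, homogeneous of
weight `a j` and with `x j = 1`, to a multiple of the linear form `g` vanishing at that point. The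
point at infinity is encoded by `g = 1` and the drop by one of the degree bound for `z`. -/
def IsShrinkable (d : ℕ) (a : n → ℤ) (S : Matrix n n K[X]) : Prop :=
  ∃ (j : n) (x z : n → K[X]) (g : K[X]), x j = 1 ∧ (∀ q, x q ∈ intDegreeLE K (a q - a j)) ∧
    g ≠ 0 ∧ g ∈ intDegreeLE K 1 ∧ (∀ l, z l ∈ intDegreeLE K (d - a l - a j - 1)) ∧
      S *ᵥ x = g • z

variable [DecidableEq n]

lemma HasDegreeLE.replaceRowCol (hS : HasDegreeLE (fun i => d - a i) a S)
    (hz : ∀ l, z l ∈ intDegreeLE K (d - a l - a j - 1)) :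
    HasDegreeLE (fun i => d - (a + Pi.single j 1 : n → ℤ) i) (a + Pi.single j 1)
      (replaceRowCol S j z) := by
  intro k l
  rw [replaceRowCol_apply]
  split_ifs with hk hl hl
  · exact zero_mem _
  · refine intDegreeLE_mono (le_of_eq ?_) (neg_mem (hz l))
    simp only [hk, Pi.add_apply, Pi.single_eq_same, Pi.single_eq_of_ne hl]
    ring
  · refine intDegreeLE_mono (le_of_eq ?_) (hz k)
    simp only [hl, Pi.add_apply, Pi.single_eq_same, Pi.single_eq_of_ne hk]
    ring
  · simpa [hk, hl] using hS k l

lemma IsShrinkable.exists_congruence (h : IsShrinkable d a S) (hS : IsAlternating S)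
    (hdeg : HasDegreeLE (fun i => d - a i) a S) :
    ∃ (j : n) (S' N : Matrix n n K[X]), IsAlternating S' ∧
      HasDegreeLE (fun i => d - (a + Pi.single j 1 : n → ℤ) i) (a + Pi.single j 1) S' ∧
      HasDegreeLE (a + Pi.single j 1) a N ∧ N.det ≠ 0 ∧ Nᵀ * S' * N = S := by
  obtain ⟨j, x, z, g, hxj, hx, hg0, hg, hz, hSx⟩ := h
  exact ⟨j, replaceRowCol S j z, shrinkMatrix j x g, hS.replaceRowCol j z,
    hdeg.replaceRowCol hz, hasDegreeLE_shrinkMatrix hx hg, by rwa [det_shrinkMatrix hxj],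
    congruence_shrinkMatrix hS hxj hSx⟩

end ShrinkingDegrees

section Dichotomy

variable {K : Type*} [Field K] {n : Type*} [Fintype n] {d : ℕ} {a : n → ℤ} {S : Matrix n n K[X]}

lemma exists_apply_eq_one_and_le_of_mulVec_eq_zero {M : Matrix n n K} {v : n → K} (hv : v ≠ 0)
    (hMv : M *ᵥ v = 0) (a : n → ℤ) :
    ∃ (w : n → K) (j : n), M *ᵥ w = 0 ∧ w j = 1 ∧ ∀ q, w q ≠ 0 → a j ≤ a q := by
  classical
  obtain ⟨i, hi⟩ := Function.ne_iff.1 hv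
  obtain ⟨j, hj, hmin⟩ := Finset.exists_min_image (Finset.univ.filter fun q => v q ≠ 0) a
    ⟨i, by simpa using hi⟩
  have hj : v j ≠ 0 := by simpa using hj
  refine ⟨(v j)⁻¹ • v, j, by rw [mulVec_smul, hMv, smul_zero], inv_mul_cancel₀ hj,
    fun q hq => hmin q ?_⟩
  simpa using right_ne_zero_of_mul hq

variable [DecidableEq n]

lemma isShrinkable_of_eval_det_eq_zero (hdeg : HasDegreeLE (fun i => d - a i) a S) {α : K}
    (hα : S.det.eval α = 0) : IsShrinkable d a S := by
  have hdet : (S.map (evalRingHom α)).det = 0 := by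
    rw [← RingHom.mapMatrix_apply, ← RingHom.map_det]
    exact hα
  obtain ⟨v, hv, hSv⟩ := exists_mulVec_eq_zero_iff.2 hdet
  obtain ⟨w, j, hSw, hwj, hmin⟩ := exists_apply_eq_one_and_le_of_mulVec_eq_zero hv hSv a
  have hw (q : n) : C (w q) ∈ intDegreeLE K (a q - a j) := by
    by_cases hq : w q = 0
    · rw [hq, C_0]
      exact zero_mem _
    · exact intDegreeLE_mono (sub_nonneg.2 (hmin q hq)) (C_mem_intDegreeLE_zero _)
  have hdvd (l : n) : X - C α ∣ (S *ᵥ fun q => C (w q)) l := by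
    rw [dvd_iff_isRoot, IsRoot.def, ← coe_evalRingHom, RingHom.map_mulVec]
    simpa [Function.comp_def] using congr_fun hSw l
  choose z hz using hdvd
  refine ⟨j, fun q => C (w q), z, X - C α, by simp [hwj], hw, X_sub_C_ne_zero α,
    mem_intDegreeLE_natCast.2 (natDegree_X_sub_C α).le, fun l => ?_, funext hz⟩
  exact mem_intDegreeLE_of_X_sub_C_mul_mem (hz l ▸ hdeg.mulVec hw l)

lemma isShrinkable_of_det_leadingMatrix_eq_zero (hdeg : HasDegreeLE (fun i => d - a i) a S)
    (h : (leadingMatrix (fun i => d - a i) a S).det = 0) : IsShrinkable d a S := by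
  obtain ⟨v, hv, hSv⟩ := exists_mulVec_eq_zero_iff.2 h
  obtain ⟨w, j, hSw, hwj, hmin⟩ := exists_apply_eq_one_and_le_of_mulVec_eq_zero hv hSv a
  let x : n → K[X] := fun q => monomial (a q - a j).toNat (w q)
  have hcast {q : n} (hq : w q ≠ 0) : a q - a j = ((a q - a j).toNat : ℤ) := by
    have := hmin q hq
    lia
  have hx (q : n) : x q ∈ intDegreeLE K (a q - a j) := by
    by_cases hq : w q = 0
    · simp only [x, hq, monomial_zero_right, zero_mem]
    · rw [hcast hq, mem_intDegreeLE_natCast]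
      exact natDegree_monomial_le _
  have hlead : (fun q => intCoeff K (a q - a j) (x q)) = w := by
    ext q
    by_cases hq : w q = 0
    · simp only [x, hq, map_zero]
    · rw [hcast hq, intCoeff_natCast, coeff_monomial_same]
  refine ⟨j, x, S *ᵥ x, 1, by simp [x, hwj], hx, one_ne_zero,
    intDegreeLE_mono zero_le_one (C_mem_intDegreeLE_zero 1), fun l => ?_, (one_smul _ _).symm⟩
  refine mem_intDegreeLE_sub_one (hdeg.mulVec hx l) ?_
  rw [hdeg.intCoeff_mulVec hx l, hlead, hSw, Pi.zero_apply]

lemma exists_pivot_of_det_eq_C [Nonempty n] (hdeg : HasDegreeLE (fun i => d - a i) a S) {c : K}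
    (hc : c ≠ 0) (hdet : S.det = C c) (hlead : (leadingMatrix (fun i => d - a i) a S).det ≠ 0) :
    ∃ (i j : n) (e : K), e ≠ 0 ∧ S i j = C e ∧ a i + a j = d := by
  -- The total weight of `S` vanishes, hence so does each weight in a nonzero permutation product.
  have hsum : ∑ i, (d - a i) - ∑ i, a i = 0 := by
    by_contra hne
    rw [← hdeg.intCoeff_det, hdet] at hlead
    rcases lt_or_gt_of_ne hne with hneg | hpos
    · exact hlead (by rw [intCoeff_of_neg hneg, LinearMap.zero_apply])
    · rw [← Int.toNat_of_nonneg hpos.le, intCoeff_natCast, coeff_C_of_ne_zero (by lia)] at hlead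
      exact hlead rfl
  have hdet0 : S.det ≠ 0 := by rwa [hdet, Ne, C_eq_zero]
  rw [det_apply] at hdet0
  obtain ⟨σ, -, hσ⟩ := Finset.exists_ne_zero_of_sum_ne_zero hdet0
  have hentry : ∀ i, S (σ i) i ≠ 0 := by
    simpa [Finset.prod_ne_zero_iff] using right_ne_zero_of_smul hσ
  have hnonneg (i : n) : 0 ≤ d - a (σ i) - a i := by
    by_contra! hlt
    exact hentry i (eq_zero_of_mem_intDegreeLE (hdeg (σ i) i) hlt)
  rw [sum_sub_sum_eq_sum_perm _ _ σ, Finset.sum_eq_zero_iff_of_nonneg fun i _ => hnonneg i] at hsum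
  obtain ⟨i⟩ := ‹Nonempty n›
  have hi : d - a (σ i) - a i = 0 := hsum i (Finset.mem_univ i)
  have hC := eq_C_of_mem_intDegreeLE_zero (hi ▸ hdeg (σ i) i)
  exact ⟨σ i, i, _, fun h0 => hentry i (by rw [hC, h0, C_0]), hC, by lia⟩

end Dichotomy

section TotalDefect

variable {n : Type*} [Fintype n]

/-- The quantity that decreases along the induction: each index counts, with one more for every
unit by which its weight stays below `d + 1`. -/
def totalDefect (d : ℕ) (a : n → ℤ) : ℕ :=
  ∑ i, ((d + 1 - a i).toNat + 1)

variable [DecidableEq n]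

lemma totalDefect_subtype_ne_lt (d : ℕ) (a : n → ℤ) (j : n) :
    totalDefect d (fun i : {i // i ≠ j} => a i) < totalDefect d a := by
  rw [totalDefect, totalDefect, Fintype.sum_eq_add_sum_subtype_ne _ j]
  lia

lemma totalDefect_add_single_lt {d : ℕ} {a : n → ℤ} {j : n} (hj : a j ≤ d) :
    totalDefect d (a + Pi.single j 1) < totalDefect d a := by
  refine Finset.sum_lt_sum (fun i _ => ?_) ⟨j, Finset.mem_univ j, ?_⟩
  · rw [Pi.add_apply, Pi.single_apply]
    split_ifs <;> lia
  · rw [Pi.add_apply, Pi.single_eq_same]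
    lia

end TotalDefect

section Factorization

variable {K : Type*} [Field K] [IsAlgClosed K] {n : Type*} [Fintype n] {d r : ℕ} {a : n → ℤ}
  {S : Matrix n n K[X]}

lemma exists_pivot_or_isShrinkable [Nonempty n] (hdeg : HasDegreeLE (fun i => d - a i) a S) :
    (∃ (i j : n) (e : K), e ≠ 0 ∧ S i j = C e ∧ a i + a j = d) ∨ IsShrinkable d a S := by
  classical
  by_cases hroot : ∃ α, S.det.eval α = 0
  · obtain ⟨α, hα⟩ := hroot
    exact .inr (isShrinkable_of_eval_det_eq_zero hdeg hα)
  by_cases hlead : (leadingMatrix (fun i => d - a i) a S).det = 0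
  · exact .inr (isShrinkable_of_det_leadingMatrix_eq_zero hdeg hlead)
  have hdegree : S.det.degree = 0 := by
    by_contra hne
    exact hroot (IsAlgClosed.exists_root S.det hne)
  have hdet : S.det = C (S.det.coeff 0) := eq_C_of_degree_eq_zero hdegree
  refine .inl (exists_pivot_of_det_eq_C hdeg (fun h0 => hroot ⟨0, ?_⟩) hdet hlead)
  rw [hdet, h0, C_0, eval_zero]

theorem IsAlternating.hasSymplecticFactorization (hS : IsAlternating S) (ha : ∀ i, 0 ≤ a i)
    (hdeg : HasDegreeLE (fun i => d - a i) a S) (hrank : genericRank S ≤ 2 * r) :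
    HasSymplecticFactorization d r a S := by
  classical
  induction hN : totalDefect d a using Nat.strong_induction_on generalizing n r with
  | _ N ih =>
  subst hN
  rcases isEmpty_or_nonempty n with hempty | hne
  · rw [Subsingleton.elim S 0]
    exact .zero d r a
  have delete_row {T : Matrix n n K[X]} {r : ℕ} (hT : IsAlternating T)
      (hTdeg : HasDegreeLE (fun i => d - a i) a T) (hTrank : genericRank T ≤ 2 * r) (j : n)
      (hj : ∀ l, T j l = 0) : HasSymplecticFactorization d r a T :=
    .of_submatrix_ne hT hj <|
      ih _ (totalDefect_subtype_ne_lt d a j) (hT.submatrix _) (fun i => ha i)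
        (fun k l => hTdeg k l) ((genericRank_submatrix_le T _ _).trans hTrank) rfl
  by_cases hlarge : ∃ j, d < a j
  · obtain ⟨j, hj⟩ := hlarge
    refine delete_row hS hdeg hrank j fun l => eq_zero_of_mem_intDegreeLE (hdeg j l) ?_
    have := ha l
    lia
  push Not at hlarge
  rcases exists_pivot_or_isShrinkable hdeg with ⟨i, j, e, he, hSij, haij⟩ | hshrink
  · have hpivot : C e⁻¹ * S i j = 1 := by
      rw [hSij, ← C_mul, inv_mul_cancel₀ he, C_1]
    have hlt := genericRank_symplecticReduction_add_two_le hS hpivot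
    obtain ⟨r, rfl⟩ : ∃ r', r = r' + 1 := Nat.exists_eq_succ_of_ne_zero (by lia)
    exact .of_symplecticReduction hdeg ha haij <| delete_row (hS.symplecticReduction i j _)
      (hdeg.symplecticReduction haij _) (by lia) i (hS.symplecticReduction_apply_left hpivot)
  · obtain ⟨j, S', N, hS', hS'deg, hNdeg, hNdet, rfl⟩ := hshrink.exists_congruence hS hdeg
    rw [genericRank_congruence S' hNdet] at hrank
    refine (ih _ (totalDefect_add_single_lt (hlarge j)) hS' (fun i => ?_) hS'deg hrank
      rfl).congruence hNdeg
    have := ha i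
    rw [Pi.add_apply, Pi.single_apply]
    split_ifs <;> lia

end Factorization

section StandardForm

variable {R : Type*} [CommRing R] {ι : Type*} [DecidableEq ι]

lemma J_eq_map_C : J ι R[X] = (J ι R).map C :=
  (map_J ι (C : R →+* R[X])).symm

lemma J_apply_of_ne {s t : ι ⊕ ι} (hst : t ≠ s.swap) : J ι R s t = 0 := by
  rcases s with i | i <;> rcases t with j | j <;> simp_all [J, one_apply, eq_comm]

lemma hasDegreeLE_J {d : ℤ} {b : ι ⊕ ι → ℤ} (hb : ∀ s, b s + b s.swap = d) :
    HasDegreeLE (fun s => d - b s) b (J ι R[X]) := by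
  rintro s t
  by_cases hst : t = s.swap
  · rw [show d - b s - b t = 0 by rw [← hb s, hst]; ring, J_eq_map_C]
    exact C_mem_intDegreeLE_zero _
  · rw [J_apply_of_ne hst]
    exact zero_mem _

lemma leadingMatrix_J {d : ℤ} {b : ι ⊕ ι → ℤ} (hb : ∀ s, b s + b s.swap = d) :
    leadingMatrix (fun s => d - b s) b (J ι R[X]) = J ι R := by
  ext s t
  rw [leadingMatrix, of_apply]
  by_cases hst : t = s.swap
  · rw [show d - b s - b t = (0 : ℕ) by rw [← hb s, hst]; push_cast; ring, J_eq_map_C,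
      intCoeff_natCast, map_apply, coeff_C_zero]
  · rw [J_apply_of_ne hst, J_apply_of_ne hst, map_zero]

variable [Fintype ι]

lemma isAlternating_J : IsAlternating (J ι R) := fun x => by
  simp [J, Matrix.mulVec, dotProduct, Fintype.sum_sum_type, one_apply, mul_comm]

variable {n : Type*} {d : ℕ} {b : ι ⊕ ι → ℕ} {W : Matrix (ι ⊕ ι) n R[X]}

lemma HasDegreeLE.natDegree_transpose_mul_J_mul_le (hb : ∀ s, b s + b s.swap = d)
    (hW : HasDegreeLE (fun s => (b s : ℤ)) 0 W) (k l : n) :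
    ((Wᵀ * J ι R[X] * W) k l).natDegree ≤ d := by
  have := ((hW.transpose d).mul (hasDegreeLE_J (by exact_mod_cast hb))).mul hW k l
  exact mem_intDegreeLE_natCast.1 (by simpa using this)

lemma HasDegreeLE.map_coeff_transpose_mul_J_mul (hb : ∀ s, b s + b s.swap = d)
    (hW : HasDegreeLE (fun s => (b s : ℤ)) 0 W) :
    (Wᵀ * J ι R[X] * W).map (coeff · d)
      = (leadingMatrix (fun s => (b s : ℤ)) 0 W)ᵀ * J ι R
        * leadingMatrix (fun s => (b s : ℤ)) 0 W := by
  have hb' : ∀ s, (b s : ℤ) + b s.swap = d := by exact_mod_cast hb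
  have hJ := hasDegreeLE_J (R := R) hb'
  rw [← leadingMatrix_transpose _ _ W d, ← leadingMatrix_J (R := R) hb',
    ← (hW.transpose d).leadingMatrix_mul hJ, ← ((hW.transpose d).mul hJ).leadingMatrix_mul hW]
  ext k l
  simp [leadingMatrix, intCoeff_natCast]

end StandardForm

section CoprimeMinors

variable {K : Type*} [Field K] {σ n : Type*} [Fintype σ] [DecidableEq σ]

/-- The maximal minors of `W` on the columns `f₁` and `f₂` have no common zero on the projective
line, where `b` bounds the degrees of the rows of `W` and the first minor does not vanish at
infinity. -/
def HasCoprimeMinors (b : σ → ℕ) (f₁ f₂ : σ → n) (W : Matrix σ n K[X]) : Prop :=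
  (W.submatrix id f₁).det.coeff (∑ s, b s) ≠ 0 ∧
    IsCoprime (W.submatrix id f₁).det (W.submatrix id f₂).det

variable [Fintype n]

lemma rank_congruence_eq_card {A : Matrix σ σ K} (hA : A.det ≠ 0) {W : Matrix σ n K} {f : σ → n}
    (hf : (W.submatrix id f).det ≠ 0) : (Wᵀ * A * W).rank = Fintype.card σ := by
  refine le_antisymm ((rank_mul_le_right _ _).trans (rank_le_card_height W)) ?_
  have hdet : ((Wᵀ * A * W).submatrix f f).det ≠ 0 := by
    rw [submatrix_mul _ _ f id f Function.bijective_id,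
      submatrix_mul _ _ f id id Function.bijective_id, det_mul, det_mul, submatrix_id_id,
      ← transpose_submatrix, det_transpose]
    exact mul_ne_zero (mul_ne_zero hf hA) hf
  exact (rank_of_det_ne_zero hdet).symm.trans_le (rank_submatrix_le _ f f)

lemma rank_map_transpose_mul_J_mul {F ι : Type*} [Field F] [Fintype ι] [DecidableEq ι]
    (φ : K[X] →+* F) {W : Matrix (ι ⊕ ι) n K[X]} {f : ι ⊕ ι → n}
    (hf : φ (W.submatrix id f).det ≠ 0) :
    ((Wᵀ * J ι K[X] * W).map φ).rank = 2 * Fintype.card ι := by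
  rw [Matrix.map_mul, Matrix.map_mul, transpose_map, map_J, two_mul, ← Fintype.card_sum]
  refine rank_congruence_eq_card (isUnit_det_J ι F).ne_zero (f := f) ?_
  rwa [RingHom.map_det, RingHom.mapMatrix_apply, ← submatrix_map] at hf

variable {ι : Type*} [Fintype ι] [DecidableEq ι] {b : ι ⊕ ι → ℕ} {f₁ f₂ : ι ⊕ ι → n}
  {W : Matrix (ι ⊕ ι) n K[X]}

lemma HasCoprimeMinors.genericRank_transpose_mul_J_mul (h : HasCoprimeMinors b f₁ f₂ W) :
    genericRank (Wᵀ * J ι K[X] * W) = 2 * Fintype.card ι :=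
  rank_map_transpose_mul_J_mul _ <| (map_ne_zero_iff _ (RatFunc.algebraMap_injective K)).2
    fun h0 => h.1 (by rw [h0, coeff_zero])

lemma HasCoprimeMinors.rank_map_eval_transpose_mul_J_mul (h : HasCoprimeMinors b f₁ f₂ W) (α : K) :
    ((Wᵀ * J ι K[X] * W).map (eval α)).rank = 2 * Fintype.card ι := by
  rcases aeval_ne_zero_of_isCoprime h.2 α with h₁ | h₂
  · exact rank_map_transpose_mul_J_mul (evalRingHom α) (by simpa using h₁)
  · exact rank_map_transpose_mul_J_mul (evalRingHom α) (by simpa using h₂)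

lemma HasCoprimeMinors.rank_map_coeff_transpose_mul_J_mul (h : HasCoprimeMinors b f₁ f₂ W)
    {d : ℕ} (hb : ∀ s, b s + b s.swap = d) (hW : HasDegreeLE (fun s => (b s : ℤ)) 0 W) :
    ((Wᵀ * J ι K[X] * W).map (coeff · d)).rank = 2 * Fintype.card ι := by
  rw [hW.map_coeff_transpose_mul_J_mul hb, two_mul, ← Fintype.card_sum]
  refine rank_congruence_eq_card (isUnit_det_J ι K).ne_zero (f := f₁) ?_
  have hminor : HasDegreeLE (fun s => (b s : ℤ)) 0 (W.submatrix id f₁) := fun s t => hW s (f₁ t)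
  have hlead := hminor.intCoeff_det
  rw [Pi.zero_def, Finset.sum_const_zero, sub_zero, ← Nat.cast_sum, intCoeff_natCast] at hlead
  exact hlead ▸ h.1

end CoprimeMinors

section GenericCoprimality

variable {K : Type*} [Field K]

lemma resultant_ne_zero_iff_isCoprime {p q : K[X]} {D E : ℕ} (hp : p.natDegree ≤ D)
    (hD : p.coeff D ≠ 0) (hq : q.natDegree ≤ E) : resultant p q D E ≠ 0 ↔ IsCoprime p q := by
  obtain rfl : p.natDegree = D := natDegree_eq_of_le_of_coeff_ne_zero hp hD
  have hp0 : p ≠ 0 := fun h0 => hD (by rw [h0, coeff_zero])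
  obtain ⟨k, rfl⟩ := Nat.exists_eq_add_of_le hq
  rw [resultant_add_right_deg _ _ _ _ _ le_rfl, mul_ne_zero_iff]
  simp [resultant_eq_zero_iff, hp0]

/-- A polynomial whose coefficients depend polynomially on a parameter, specialized at the value `t`
of the parameter. -/
noncomputable def specialize (t : K) : K[X][X] →+* K[X] :=
  mapRingHom (evalRingHom t)

lemma coeff_specialize (t : K) (p : K[X][X]) (k : ℕ) :
    (specialize t p).coeff k = (p.coeff k).eval t := by
  simp [specialize]

lemma natDegree_specialize_le (t : K) (p : K[X][X]) :
    (specialize t p).natDegree ≤ p.natDegree :=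
  natDegree_map_le

lemma eventually_cofinite_isCoprime_specialize {p q : K[X][X]} {D : ℕ} (hp : p.natDegree ≤ D)
    {t₀ : K} (hD : (specialize t₀ p).coeff D ≠ 0)
    (hpq : IsCoprime (specialize t₀ p) (specialize t₀ q)) :
    ∀ᶠ t in Filter.cofinite, (specialize t p).coeff D ≠ 0 ∧
      IsCoprime (specialize t p) (specialize t q) := by
  let H : K[X] := p.coeff D * resultant p q D q.natDegree
  have hH (t : K) : H.eval t ≠ 0 ↔ (specialize t p).coeff D ≠ 0 ∧
      IsCoprime (specialize t p) (specialize t q) := by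
    rw [eval_mul, mul_ne_zero_iff, ← coeff_specialize]
    refine and_congr_right fun ht => ?_
    rw [← resultant_ne_zero_iff_isCoprime ((natDegree_specialize_le t p).trans hp) ht
      (natDegree_specialize_le t q), specialize, coe_mapRingHom, resultant_map_map,
      coe_evalRingHom]
  have hH0 : H ≠ 0 := fun h0 => (hH t₀).2 ⟨hD, hpq⟩ (by rw [h0, eval_zero])
  filter_upwards [(finite_setOfPred_isRoot hH0).eventually_cofinite_notMem] with t ht
  exact (hH t).1 ht

/-- The line `t ↦ W + C t • U` of matrix polynomials, with `t` as a formal parameter. -/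
noncomputable def formalLine {m n : Type*} (W U : Matrix m n K[X]) : Matrix m n K[X][X] :=
  W.map (mapRingHom C) + (C X : K[X][X]) • U.map (mapRingHom C)

lemma formalLine_map_specialize {m n : Type*} (W U : Matrix m n K[X]) (t : K) :
    (formalLine W U).map (specialize t) = W + C t • U := by
  ext k l i
  simp [formalLine, specialize, Polynomial.map_map]

lemma hasDegreeLE_formalLine {m n : Type*} {b : m → ℤ} {a : n → ℤ} {W U : Matrix m n K[X]}
    (hW : HasDegreeLE b a W) (hU : HasDegreeLE b a U) : HasDegreeLE b a (formalLine W U) := by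
  intro k l i hi
  simp [formalLine, hW k l i hi, hU k l i hi]

variable {σ n : Type*} [Fintype σ] [DecidableEq σ]

lemma HasCoprimeMinors.eventually_cofinite_add_smul {b : σ → ℕ} {f₁ f₂ : σ → n}
    {W U : Matrix σ n K[X]} (hW : HasDegreeLE (fun s => (b s : ℤ)) 0 W)
    (hU : HasDegreeLE (fun s => (b s : ℤ)) 0 U) (h : HasCoprimeMinors b f₁ f₂ (W + U)) :
    ∀ᶠ t in Filter.cofinite, HasCoprimeMinors b f₁ f₂ (W + (C t : K[X]) • U) := by
  have minor_eq (f : σ → n) (t : K) : specialize t ((formalLine W U).submatrix id f).det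
      = ((W + (C t : K[X]) • U).submatrix id f).det := by
    rw [RingHom.map_det, RingHom.mapMatrix_apply, ← submatrix_map, formalLine_map_specialize]
  have hminor : HasDegreeLE (fun s => (b s : ℤ)) 0 ((formalLine W U).submatrix id f₁) :=
    fun s t => hasDegreeLE_formalLine hW hU s (f₁ t)
  have hdeg : ((formalLine W U).submatrix id f₁).det.natDegree ≤ ∑ s, b s :=
    mem_intDegreeLE_natCast.1 (by simpa using hminor.det_mem)
  have hone : W + U = W + (C 1 : K[X]) • U := by rw [C_1, one_smul]
  rw [hone, HasCoprimeMinors, ← minor_eq, ← minor_eq] at h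
  simpa only [HasCoprimeMinors, minor_eq] using
    eventually_cofinite_isCoprime_specialize hdeg h.1 h.2

/-- The matrix with `X ^ b i` on the diagonal and `1` on the superdiagonal, whose extreme maximal
minors are the coprime polynomials `X ^ ∑ i, b i` and `1`. -/
noncomputable def staircaseMatrix (K : Type*) [Field K] {k : ℕ} (b : Fin k → ℕ) :
    Matrix (Fin k) (Fin (k + 1)) K[X] :=
  of fun i j => if j = i.castSucc then X ^ b i else if j = i.succ then 1 else 0

lemma natDegree_staircaseMatrix_le {k : ℕ} (b : Fin k → ℕ) (i : Fin k) (j : Fin (k + 1)) :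
    (staircaseMatrix K b i j).natDegree ≤ b i := by
  rw [staircaseMatrix, of_apply]
  split_ifs <;> simp

lemma det_staircaseMatrix_castSucc {k : ℕ} (b : Fin k → ℕ) :
    ((staircaseMatrix K b).submatrix id Fin.castSucc).det = X ^ ∑ i, b i := by
  rw [det_of_isUpperTriangular, ← Finset.prod_pow_eq_pow_sum]
  · simp [staircaseMatrix]
  · intro i j hji
    have hlt : j < i := hji
    rw [submatrix_apply, staircaseMatrix, of_apply, if_neg (by simp [hlt.ne]),
      if_neg (by simp [Fin.ext_iff]; lia)]

lemma det_staircaseMatrix_succ {k : ℕ} (b : Fin k → ℕ) :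
    ((staircaseMatrix K b).submatrix id Fin.succ).det = 1 := by
  rw [det_of_isLowerTriangular]
  · simp [staircaseMatrix, Fin.ext_iff]
  · intro i j hij
    have hlt : i < j := hij
    rw [submatrix_apply, staircaseMatrix, of_apply, if_neg (by simp [Fin.ext_iff]; lia),
      if_neg (by simp [hlt.ne'])]

lemma exists_hasCoprimeMinors [Fintype n] (h : Fintype.card σ < Fintype.card n) (b : σ → ℕ) :
    ∃ (f₁ f₂ : σ → n) (W : Matrix σ n K[X]), HasDegreeLE (fun s => (b s : ℤ)) 0 W ∧
      HasCoprimeMinors b f₁ f₂ W := by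
  let e : σ ≃ Fin (Fintype.card σ) := Fintype.equivFin σ
  obtain ⟨g⟩ : Nonempty (Fin (Fintype.card σ + 1) ↪ n) :=
    Function.Embedding.nonempty_of_card_le (by simpa using h)
  let S := staircaseMatrix K (b ∘ e.symm)
  let W : Matrix σ n K[X] := of fun s => Function.extend g (S (e s)) 0
  have minor_eq (f : Fin (Fintype.card σ) → Fin (Fintype.card σ + 1)) :
      (W.submatrix id (g ∘ f ∘ e)).det = (S.submatrix id f).det := by
    rw [← det_submatrix_equiv_self e (S.submatrix id f)]
    congr 1
    ext1 s t
    exact g.injective.extend_apply _ _ _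
  refine ⟨g ∘ Fin.castSucc ∘ e, g ∘ Fin.succ ∘ e, W, fun s l => ?_, ?_⟩
  · rw [Pi.zero_apply, sub_zero, mem_intDegreeLE_natCast]
    change (Function.extend g (S (e s)) 0 l).natDegree ≤ b s
    by_cases hl : ∃ j, g j = l
    · obtain ⟨j, rfl⟩ := hl
      rw [g.injective.extend_apply]
      simpa using natDegree_staircaseMatrix_le (K := K) (b ∘ e.symm) (e s) j
    · rw [Function.extend_apply' _ _ _ hl, Pi.zero_apply, natDegree_zero]
      exact Nat.zero_le _
  · rw [HasCoprimeMinors, minor_eq, minor_eq, det_staircaseMatrix_castSucc,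
      det_staircaseMatrix_succ, ← Equiv.sum_comp e.symm b]
    exact ⟨by simp, isCoprime_one_right⟩

end GenericCoprimality

section Limit

lemma continuous_map_coeff_congruence {R m n : Type*} [CommRing R] [TopologicalSpace R]
    [IsTopologicalRing R] [Fintype m] (A : Matrix m m R[X]) (W U : Matrix m n R[X]) (k : ℕ) :
    Continuous fun t : R =>
      ((W + (C t : R[X]) • U)ᵀ * A * (W + (C t : R[X]) • U)).map (coeff · k) := by
  refine continuous_matrix fun i j => ?_
  simp only [map_apply, mul_apply, transpose_apply, Matrix.add_apply, Matrix.smul_apply,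
    smul_eq_mul, ← smul_eq_C_mul, finsetSum_coeff, coeff_mul, coeff_add, coeff_smul]
  fun_prop

variable {𝕜 : Type*} [NontriviallyNormedField 𝕜] {σ n : Type*} [Fintype σ] [DecidableEq σ]
  [Fintype n]

lemma exists_seq_tendsto_zero_hasCoprimeMinors (h : Fintype.card σ < Fintype.card n) {b : σ → ℕ}
    {W : Matrix σ n 𝕜[X]} (hW : HasDegreeLE (fun s => (b s : ℤ)) 0 W) :
    ∃ (f₁ f₂ : σ → n) (U : Matrix σ n 𝕜[X]) (t : ℕ → 𝕜),
      HasDegreeLE (fun s => (b s : ℤ)) 0 U ∧ Filter.Tendsto t Filter.atTop (nhds 0) ∧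
      ∀ k, HasCoprimeMinors b f₁ f₂ (W + (C (t k) : 𝕜[X]) • U) := by
  obtain ⟨f₁, f₂, W₀, hW₀, hcoprime⟩ := exists_hasCoprimeMinors (K := 𝕜) h b
  have hU : HasDegreeLE (fun s => (b s : ℤ)) 0 (W₀ - W) :=
    fun s l => sub_mem (hW₀ s l) (hW s l)
  rw [← add_sub_cancel W W₀] at hcoprime
  have hnear := (hcoprime.eventually_cofinite_add_smul hW hU).filter_mono
    (nhdsNE_le_cofinite (0 : 𝕜))
  obtain ⟨t, ht, hcoprime_t⟩ := Filter.exists_seq_forall_of_frequently hnear.frequently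
  exact ⟨f₁, f₂, W₀ - W, t, hU, ht.mono_right nhdsWithin_le_nhds, hcoprime_t⟩

end Limit

theorem skew_symmetric_bounded_rank_limit_of_generic_general {𝕜 n : Type*}
    [NontriviallyNormedField 𝕜] [IsAlgClosed 𝕜] [Fintype n] {r d : ℕ}
    (hr : 2 * r < Fintype.card n) {P : Matrix n n 𝕜[X]} (hP : IsAlternating P)
    (hgrade : ∀ i j, (P i j).natDegree ≤ d) (hrank : genericRank P ≤ 2 * r) :
    ∃ Q : ℕ → Matrix n n 𝕜[X],
      (∀ k, IsAlternating (Q k)) ∧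
      (∀ k i j, (Q k i j).natDegree ≤ d) ∧
      (∀ k, genericRank (Q k) = 2 * r) ∧
      (∀ k α, ((Q k).map (eval α)).rank = 2 * r) ∧
      (∀ k, ((Q k).map (coeff · d)).rank = 2 * r) ∧
      ∀ i, Filter.Tendsto (fun k => (Q k).map (coeff · i)) Filter.atTop
        (nhds (P.map (coeff · i))) := by
  obtain ⟨b, W, hb, hW, rfl⟩ : HasSymplecticFactorization d r 0 P :=
    hP.hasSymplecticFactorization (fun _ => le_rfl)
      (fun i j => by simpa using mem_intDegreeLE_natCast.2 (hgrade i j)) hrank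
  obtain ⟨f₁, f₂, U, t, hU, ht, hcoprime⟩ :=
    exists_seq_tendsto_zero_hasCoprimeMinors (by simpa [← two_mul] using hr) hW
  have hdeg (k : ℕ) : HasDegreeLE (fun s => (b s : ℤ)) 0 (W + (C (t k) : 𝕜[X]) • U) :=
    fun s l => add_mem (hW s l) (by simpa [← smul_eq_C_mul] using Submodule.smul_mem _ _ (hU s l))
  refine ⟨fun k => (W + (C (t k) : 𝕜[X]) • U)ᵀ * J (Fin r) 𝕜[X] * (W + (C (t k) : 𝕜[X]) • U),
    fun k => isAlternating_J.congruence _, fun k => (hdeg k).natDegree_transpose_mul_J_mul_le hb,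
    fun k => ?_, fun k α => ?_, fun k => ?_, fun i => ?_⟩
  · simpa using (hcoprime k).genericRank_transpose_mul_J_mul
  · simpa using (hcoprime k).rank_map_eval_transpose_mul_J_mul α
  · simpa using (hcoprime k).rank_map_coeff_transpose_mul_J_mul hb (hdeg k)
  · have hlim := ((continuous_map_coeff_congruence (J (Fin r) 𝕜[X]) W U i).tendsto 0).comp ht
    simpa [Function.comp_def] using hlim

/-- Every m×m skew-symmetric matrix polynomial of grade `d` and normal rank at most `2r`
is the coefficientwise limit of skew-symmetric matrix polynomials of grade `d`, degree
exactly `d`, normal rank exactly `2r`, and with no (finite or infinite) eigenvalues. -/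
theorem skew_symmetric_bounded_rank_limit_of_generic (m r d : ℕ)
    (hm : 2 < m) (hd : 1 ≤ d) (h2 : 2 ≤ 2 * r) (hrm : 2 * r ≤ m - 1)
    (P : Matrix (Fin m) (Fin m) (Polynomial ℂ)) (hP : Pᵀ = -P)
    (hgrade : ∀ i j, (P i j).natDegree ≤ d) (hrk : normalRank P ≤ 2 * r) :
    ∃ Q : ℕ → Matrix (Fin m) (Fin m) (Polynomial ℂ),
      (∀ n, (Q n)ᵀ = -(Q n)) ∧
      (∀ n i j, ((Q n) i j).natDegree ≤ d) ∧
      (∀ n, (Matrix.of fun a b => ((Q n) a b).coeff d) ≠ (0 : Matrix (Fin m) (Fin m) ℂ)) ∧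
      (∀ n, normalRank (Q n) = 2 * r) ∧
      (∀ n, ∀ α : ℂ, ((Q n).map (Polynomial.eval α)).rank = 2 * r) ∧
      (∀ n, (Matrix.of fun a b => ((Q n) a b).coeff d).rank = 2 * r) ∧
      Filter.Tendsto (fun n => coeffTuple m d (Q n)) Filter.atTop
        (nhds (coeffTuple m d P)) := by
  obtain ⟨Q, hQ, hdeg, hrank, heval, hlead, hlim⟩ :=
    skew_symmetric_bounded_rank_limit_of_generic_general (by rw [Fintype.card_fin]; lia)
      (isAlternating_of_transpose_eq_neg two_ne_zero hP) hgrade hrk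
  refine ⟨Q, fun n => (hQ n).transpose_eq_neg, hdeg, fun n h0 => ?_, hrank, heval, hlead,
    tendsto_pi_nhds.2 fun i => hlim i⟩
  have hzero : (0 : Matrix (Fin m) (Fin m) ℂ).rank = 2 * r := h0 ▸ hlead n
  rw [rank_zero] at hzero
  lia
end
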